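/- (Theorem 14, second claim.) For s > 0, let 𝒩_{AR}(s) be the number of conjugacy classes of PSL₂(ℤ) consisting of primitive hyperbolic elements γ with translation length ℓ(γ) = 2·arcosh(|tr γ|/2) ≤ s that are reciprocal (γ conjugate in PSL₂(ℤ) to γ⁻¹) and contain an element ambiguous of the first kind or an element ambiguous of the second kind. Then, as s → +∞, 𝒩_{AR}(s) = (3/(8π)) s e^{s/4} + O(e^{s/4}). -/

import Mathlib

open Matrix
open scoped MatrixGroups

instance : Fact (Even (Fintype.card (Fin 2))) := ⟨⟨1, rfl⟩⟩

/-- The determinant `-1` integer matrix `W = [[1, 0], [0, -1]]`. -/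
noncomputable def Wmat : Matrix (Fin 2) (Fin 2) ℤ := !![1, 0; 0, -1]

/-- The determinant `-1` integer matrix `W₁ = [[1, 0], [1, -1]]`. -/
noncomputable def W1mat : Matrix (Fin 2) (Fin 2) ℤ := !![1, 0; 1, -1]

/-- A lift `A ∈ SL₂(ℤ)` is ambiguous of the first kind if `W·A·W⁻¹ = ±A⁻¹`. -/
def Amb1 (A : SL(2, ℤ)) : Prop :=
  Wmat * (A : Matrix (Fin 2) (Fin 2) ℤ) * Wmat⁻¹ = ((A⁻¹ : SL(2, ℤ)) : Matrix (Fin 2) (Fin 2) ℤ) ∨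
  Wmat * (A : Matrix (Fin 2) (Fin 2) ℤ) * Wmat⁻¹ = -((A⁻¹ : SL(2, ℤ)) : Matrix (Fin 2) (Fin 2) ℤ)

/-- A lift `A ∈ SL₂(ℤ)` is ambiguous of the second kind if `W₁·A·W₁⁻¹ = ±A⁻¹`. -/
def Amb2 (A : SL(2, ℤ)) : Prop :=
  W1mat * (A : Matrix (Fin 2) (Fin 2) ℤ) * W1mat⁻¹ = ((A⁻¹ : SL(2, ℤ)) : Matrix (Fin 2) (Fin 2) ℤ) ∨
  W1mat * (A : Matrix (Fin 2) (Fin 2) ℤ) * W1mat⁻¹ = -((A⁻¹ : SL(2, ℤ)) : Matrix (Fin 2) (Fin 2) ℤ)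

/-- The subgroup `{±1}` of `SL₂(ℤ)`. -/
def pmOne : Subgroup SL(2, ℤ) := Subgroup.zpowers (-1)

instance : pmOne.Normal := by
  constructor
  intro x hx g
  obtain ⟨n, rfl⟩ := Subgroup.mem_zpowers_iff.mp hx
  have hc : Commute g (-1 : SL(2, ℤ)) := by
    show g * (-1) = (-1) * g
    apply Subtype.ext
    show ((g * (-1) : SL(2, ℤ)) : Matrix (Fin 2) (Fin 2) ℤ)
        = (((-1) * g : SL(2, ℤ)) : Matrix (Fin 2) (Fin 2) ℤ)
    simp
  have hcn : Commute g ((-1 : SL(2, ℤ)) ^ n) := hc.zpow_right n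
  have : g * (-1 : SL(2, ℤ)) ^ n * g⁻¹ = (-1) ^ n := by
    rw [hcn.eq, mul_assoc, mul_inv_cancel, mul_one]
  rw [this]
  exact Subgroup.zpow_mem _ (Subgroup.mem_zpowers _) n

/-- `PSL₂(ℤ) = SL₂(ℤ)/{±1}`. -/
abbrev PSL2Z := SL(2, ℤ) ⧸ pmOne

/-- An element of `PSL₂(ℤ)` is hyperbolic if the absolute value of the trace of a lift
to `SL₂(ℤ)` is greater than `2`. -/
def IsHyp (γ : PSL2Z) : Prop :=
  ∃ A : SL(2, ℤ), (QuotientGroup.mk A : PSL2Z) = γ ∧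
    2 < |Matrix.trace (A : Matrix (Fin 2) (Fin 2) ℤ)|

/-- An element of `PSL₂(ℤ)` is primitive if it is not a proper power. -/
def IsPrim (γ : PSL2Z) : Prop := ¬ ∃ (δ : PSL2Z) (n : ℕ), 2 ≤ n ∧ δ ^ n = γ

/-- An element of `PSL₂(ℤ)` is ambiguous of the first kind if it has a lift which is. -/
def AmbFst (γ : PSL2Z) : Prop :=
  ∃ A : SL(2, ℤ), (QuotientGroup.mk A : PSL2Z) = γ ∧ Amb1 A

/-- An element of `PSL₂(ℤ)` is ambiguous of the second kind if it has a lift which is. -/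
def AmbSnd (γ : PSL2Z) : Prop :=
  ∃ A : SL(2, ℤ), (QuotientGroup.mk A : PSL2Z) = γ ∧ Amb2 A

/-- The inverse hyperbolic cosine. -/
noncomputable def arcosh (x : ℝ) : ℝ := Real.log (x + Real.sqrt (x ^ 2 - 1))

/-- The translation length `ℓ(γ) = 2 arcosh(|tr γ|/2)` of `γ ∈ PSL₂(ℤ)` is at most `s`. -/
def TransLenLE (γ : PSL2Z) (s : ℝ) : Prop :=
  ∃ A : SL(2, ℤ), (QuotientGroup.mk A : PSL2Z) = γ ∧
    2 * arcosh (((|Matrix.trace (A : Matrix (Fin 2) (Fin 2) ℤ)| : ℤ) : ℝ) / 2) ≤ s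

/-- The number of conjugacy classes of primitive hyperbolic reciprocal elements of
`PSL₂(ℤ)` with translation length at most `s` containing an element ambiguous of the
first or of the second kind. -/
noncomputable def NAmbRec (s : ℝ) : ℕ :=
  {C : ConjClasses PSL2Z | ∃ γ : PSL2Z, ConjClasses.mk γ = C ∧
      IsPrim γ ∧ IsHyp γ ∧ TransLenLE γ s ∧ IsConj γ γ⁻¹ ∧
      ∃ δ : PSL2Z, IsConj γ δ ∧ (AmbFst δ ∨ AmbSnd δ)}.ncard

/-!
A primitive reciprocal hyperbolic class has a symmetric representative `A`. If it is also
ambiguous, then `A = G²` with `G` integral, symmetric, of determinant `-1` and positive trace, so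
that `tr A = (tr G)² + 2` and `ℓ ≤ s` amounts to `tr G ≤ e^{s/4}` up to a bounded error. Factoring
`x z = (y - 1) (y + 1)` for `G = [[x, y], [y, z]]` writes `G` through the rows of an integer matrix
`[[α, β], [γ, δ]]` of determinant `2` with `gcd(α, β) = 1`, where `tr G = α γ + β δ`. Exchanging
the rows does not change the class, so the first row may be taken to be the shorter one. For a
given first row the possible second rows differ by its multiples, so there are
`K / (α² + β²) + O(1)` of them with `tr G ≤ K`; summing over `α² + β² ≤ K + 1` gives
`(3 / (2π)) K log K + O(K)`. The imprimitive squares come from odd powers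
`G = F^{2 j + 1}` with `j ≥ 1`, of which there are only `O(K)`.
-/

section LatticeSums

/-- The summand `1 / (a² + b²)` of the lattice sums below; by junk division it is `0` at the
origin. -/
noncomputable def invNormSq (a b : ℕ) : ℝ := 1 / ((a : ℝ) ^ 2 + (b : ℝ) ^ 2)

theorem invNormSq_comm (a b : ℕ) : invNormSq a b = invNormSq b a := by
  simp only [invNormSq, add_comm]

theorem invNormSq_nonneg (a b : ℕ) : 0 ≤ invNormSq a b := by
  unfold invNormSq
  positivity

theorem invNormSq_zero_right (a : ℕ) : invNormSq a 0 = 1 / (a : ℝ) ^ 2 := by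
  simp [invNormSq]

theorem invNormSq_mul_mul (d a b : ℕ) :
    invNormSq (d * a) (d * b) = invNormSq a b / (d : ℝ) ^ 2 := by
  simp only [invNormSq, Nat.cast_mul, div_div]
  ring_nf

theorem invNormSq_bounds_arctan {N : ℕ} (hN : 0 < N) (i : ℕ) :
    invNormSq N (i + 1) ≤ (Real.arctan ((i + 1 : ℕ) / N) - Real.arctan ((i : ℕ) / N)) / N ∧
      (Real.arctan ((i + 1 : ℕ) / N) - Real.arctan ((i : ℕ) / N)) / N ≤ invNormSq N i := by
  have hN' : (0 : ℝ) < N := by exact_mod_cast hN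
  have hlt : ((i : ℕ) : ℝ) / N < ((i + 1 : ℕ) : ℝ) / N := by
    gcongr
    simp
  obtain ⟨c, ⟨hic, hci⟩, hslope⟩ := exists_deriv_eq_slope Real.arctan hlt
    Real.continuous_arctan.continuousOn Real.differentiable_arctan.differentiableOn
  have hstep : ((i + 1 : ℕ) : ℝ) / N - (i : ℕ) / N = 1 / N := by
    push_cast
    ring
  have hincrement : (Real.arctan ((i + 1 : ℕ) / N) - Real.arctan ((i : ℕ) / N)) / N
      = 1 / (N ^ 2 + (N * c) ^ 2) := by
    rw [hstep, Real.deriv_arctan] at hslope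
    field_simp at hslope ⊢
    linarith
  have hc : 0 ≤ c := (by positivity : (0 : ℝ) ≤ (i : ℕ) / N).trans hic.le
  have hic' : (i : ℝ) ≤ N * c := by linarith [(div_lt_iff₀ hN').1 hic]
  have hci' : N * c ≤ ((i + 1 : ℕ) : ℝ) := by linarith [(lt_div_iff₀ hN').1 hci]
  rw [hincrement]
  unfold invNormSq
  constructor <;> gcongr

theorem sum_invNormSq_row_bounds {N : ℕ} (hN : 0 < N) :
    ∑ i ∈ Finset.range N, invNormSq N (i + 1) ≤ Real.pi / 4 / N ∧
      Real.pi / 4 / N ≤ ∑ i ∈ Finset.range N, invNormSq N i := by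
  have hN' : (N : ℝ) ≠ 0 := by exact_mod_cast hN.ne'
  have htelescope : ∑ i ∈ Finset.range N,
      (Real.arctan ((i + 1 : ℕ) / N) - Real.arctan ((i : ℕ) / N)) / N = Real.pi / 4 / N := by
    rw [← Finset.sum_div, Finset.sum_range_sub fun i : ℕ => Real.arctan ((i : ℕ) / (N : ℝ))]
    simp [hN']
  rw [← htelescope]
  exact ⟨Finset.sum_le_sum fun i _ => (invNormSq_bounds_arctan hN i).1,
    Finset.sum_le_sum fun i _ => (invNormSq_bounds_arctan hN i).2⟩

theorem abs_sum_invNormSq_hook_sub_le {N : ℕ} (hN : 0 < N) :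
    |(∑ i ∈ Finset.range N, invNormSq N i + ∑ i ∈ Finset.range N, invNormSq N (i + 1))
      - Real.pi / 2 / N| ≤ 1 / (N : ℝ) ^ 2 := by
  obtain ⟨hupper, hlower⟩ := sum_invNormSq_row_bounds hN
  have hshift : ∑ i ∈ Finset.range N, invNormSq N i + invNormSq N N
      = ∑ i ∈ Finset.range N, invNormSq N (i + 1) + 1 / (N : ℝ) ^ 2 := by
    rw [← Finset.sum_range_succ, Finset.sum_range_succ', invNormSq_zero_right]
  have hhalf : Real.pi / 2 / N = 2 * (Real.pi / 4 / N) := by ring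
  rw [hhalf, abs_le]
  constructor <;> linarith [invNormSq_nonneg N N]

/-- The sum of `1 / (a² + b²)` over the lattice points of `[1, n] × [0, n]`. -/
noncomputable def boxInvNormSqSum (n : ℕ) : ℝ :=
  ∑ p ∈ Finset.Icc 1 n ×ˢ Finset.range (n + 1), invNormSq p.1 p.2

theorem boxInvNormSqSum_succ (n : ℕ) :
    boxInvNormSqSum (n + 1) = boxInvNormSqSum n +
      (∑ i ∈ Finset.range (n + 1), invNormSq (n + 1) i +
        ∑ i ∈ Finset.range (n + 1), invNormSq (n + 1) (i + 1)) := by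
  have hrow : ∑ i ∈ Finset.range (n + 1), invNormSq (n + 1) (i + 1)
      = ∑ a ∈ Finset.Icc 1 n, invNormSq a (n + 1) + invNormSq (n + 1) (n + 1) := by
    rw [Finset.sum_range_succ, Finset.range_eq_Ico,
      Finset.sum_Ico_add' (fun i => invNormSq (n + 1) i) 0 n 1, zero_add,
      Finset.Ico_add_one_right_eq_Icc]
    simp only [invNormSq_comm]
  simp only [boxInvNormSqSum, Finset.sum_product]
  rw [Finset.sum_Icc_succ_top (by omega), hrow]
  simp only [Finset.sum_range_succ _ (n + 1), Finset.sum_add_distrib]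
  ring

theorem sum_one_div_sq_le (n : ℕ) :
    ∑ d ∈ Finset.Icc 1 n, 1 / (d : ℝ) ^ 2 ≤ Real.pi ^ 2 / 6 :=
  sum_le_hasSum _ (fun _ _ => by positivity) hasSum_zeta_two

theorem le_sum_one_div_sq {n : ℕ} (hn : 1 ≤ n) :
    Real.pi ^ 2 / 6 - 1 / n ≤ ∑ d ∈ Finset.Icc 1 n, 1 / (d : ℝ) ^ 2 := by
  have hpartial : ∀ m ≥ n, ∑ d ∈ Finset.range (m + 1), 1 / (d : ℝ) ^ 2
      ≤ ∑ d ∈ Finset.Icc 1 n, 1 / (d : ℝ) ^ 2 + 1 / (n : ℝ) := by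
    intro m hm
    have htail := sum_Ioc_inv_sq_le_sub (α := ℝ) (by omega : n ≠ 0) hm
    have hm0 : (0 : ℝ) ≤ (m : ℝ)⁻¹ := by positivity
    have hsplit := Finset.sum_range_add_sum_Ico (fun d : ℕ => 1 / (d : ℝ) ^ 2)
      (by omega : n + 1 ≤ m + 1)
    rw [Finset.Ico_add_one_add_one_eq_Ioc] at hsplit
    have hzero : ∑ d ∈ Finset.range (n + 1), 1 / (d : ℝ) ^ 2
        = ∑ d ∈ Finset.Icc 1 n, 1 / (d : ℝ) ^ 2 := by
      rw [Finset.range_eq_Ico, Finset.sum_eq_sum_Ico_succ_bot (by omega)]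
      simp [Finset.Ico_add_one_right_eq_Icc]
    simp only [one_div] at *
    linarith
  have hlim := hasSum_zeta_two.tendsto_sum_nat.comp (Filter.tendsto_add_atTop_nat 1)
  linarith [le_of_tendsto hlim ((Filter.eventually_ge_atTop n).mono hpartial)]

theorem pi_sq_div_six_lt : Real.pi ^ 2 / 6 < 7 / 4 := by
  nlinarith [Real.pi_lt_d2, Real.pi_pos]

theorem abs_boxInvNormSqSum_sub_harmonic_le (n : ℕ) :
    |boxInvNormSqSum n - Real.pi / 2 * (harmonic n : ℝ)|
      ≤ ∑ d ∈ Finset.Icc 1 n, 1 / (d : ℝ) ^ 2 := by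
  induction n with
  | zero => simp [boxInvNormSqSum]
  | succ n ih =>
    have hhook := abs_sum_invNormSq_hook_sub_le n.succ_pos
    have hharmonic : Real.pi / 2 * ((harmonic (n + 1) : ℚ) : ℝ)
        = Real.pi / 2 * (harmonic n : ℝ) + Real.pi / 2 / (n + 1 : ℕ) := by
      rw [harmonic_succ]
      push_cast
      ring
    rw [boxInvNormSqSum_succ, hharmonic, add_sub_add_comm, Finset.sum_Icc_succ_top (by omega)]
    exact (abs_add_le _ _).trans (add_le_add ih hhook)

theorem abs_boxInvNormSqSum_sub_log_le {n : ℕ} (hn : 1 ≤ n) :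
    |boxInvNormSqSum n - Real.pi / 2 * Real.log n| ≤ 4 := by
  have hharmonic := abs_boxInvNormSqSum_sub_harmonic_le n
  have hlog : Real.log n ≤ harmonic n :=
    (Real.log_le_log (by exact_mod_cast hn) (by simp)).trans (log_add_one_le_harmonic n)
  have hlog' := harmonic_le_one_add_log n
  have hsum : ∑ d ∈ Finset.Icc 1 n, 1 / (d : ℝ) ^ 2 ≤ 2 := by
    linarith [sum_one_div_sq_le n, pi_sq_div_six_lt]
  rw [abs_le] at *
  constructor <;> nlinarith [Real.pi_gt_three, Real.pi_lt_four]

/-- The primitive lattice points of `[1, n] × [0, n]`. -/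
def primitivePoints (n : ℕ) : Finset (ℕ × ℕ) :=
  {p ∈ Finset.Icc 1 n ×ˢ Finset.range (n + 1) | p.1.gcd p.2 = 1}

theorem mem_primitivePoints {n a b : ℕ} :
    (a, b) ∈ primitivePoints n ↔ ((1 ≤ a ∧ a ≤ n) ∧ b ≤ n) ∧ a.gcd b = 1 := by
  simp only [primitivePoints, Finset.mem_filter, Finset.mem_product, Finset.mem_Icc,
    Finset.mem_range, Order.lt_add_one_iff]

/-- The sum of `1 / (a² + b²)` over the primitive lattice points of `[1, n] × [0, n]`. -/
noncomputable def coprimeInvNormSqSum (n : ℕ) : ℝ :=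
  ∑ p ∈ primitivePoints n, invNormSq p.1 p.2

theorem sum_invNormSq_gcd_eq {n d : ℕ} (hd : 0 < d) :
    ∑ p ∈ Finset.Icc 1 n ×ˢ Finset.range (n + 1) with p.1.gcd p.2 = d, invNormSq p.1 p.2
      = coprimeInvNormSqSum (n / d) / (d : ℝ) ^ 2 := by
  rw [coprimeInvNormSqSum, Finset.sum_div]
  refine (Finset.sum_bij (fun p _ => (d * p.1, d * p.2)) ?_ ?_ ?_ ?_).symm
  · rintro ⟨a, b⟩ hab
    simp only [mem_primitivePoints, Finset.mem_filter, Finset.mem_product, Finset.mem_Icc,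
      Finset.mem_range, Order.lt_add_one_iff, Nat.le_div_iff_mul_le hd,
      Nat.gcd_mul_left] at hab ⊢
    obtain ⟨⟨⟨ha, han⟩, hbn⟩, hgcd⟩ := hab
    exact ⟨⟨⟨Nat.mul_pos hd ha, by linarith⟩, by linarith⟩, by simp [hgcd]⟩
  · rintro ⟨a, b⟩ - ⟨a', b'⟩ - h
    simpa [hd.ne'] using h
  · rintro ⟨a, b⟩ hab
    simp only [Finset.mem_filter, Finset.mem_product, Finset.mem_Icc, Finset.mem_range,
      Order.lt_add_one_iff] at hab
    obtain ⟨⟨⟨ha, han⟩, hbn⟩, rfl⟩ := hab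
    obtain ⟨a', b', hcoprime, haa', hbb'⟩ := Nat.exists_coprime a b
    generalize a.gcd b = d at *
    subst haa' hbb'
    refine ⟨(a', b'), ?_, by simp [mul_comm]⟩
    simp only [mem_primitivePoints, Nat.le_div_iff_mul_le hd]
    exact ⟨⟨⟨Nat.pos_of_mul_pos_right ha, han⟩, hbn⟩, hcoprime⟩
  · rintro ⟨a, b⟩ -
    exact (invNormSq_mul_mul d a b).symm

theorem boxInvNormSqSum_eq_sum_coprimeInvNormSqSum (n : ℕ) :
    boxInvNormSqSum n = ∑ d ∈ Finset.Icc 1 n, coprimeInvNormSqSum (n / d) / (d : ℝ) ^ 2 := by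
  rw [boxInvNormSqSum,
    ← Finset.sum_fiberwise_of_maps_to (t := Finset.Icc 1 n) (g := fun p => p.1.gcd p.2)]
  · exact Finset.sum_congr rfl fun d hd => sum_invNormSq_gcd_eq (Finset.mem_Icc.1 hd).1
  · rintro ⟨a, b⟩ hab
    simp only [Finset.mem_product, Finset.mem_Icc, Finset.mem_range] at hab ⊢
    exact ⟨Nat.gcd_pos_of_pos_left _ hab.1.1, (Nat.gcd_le_left _ hab.1.1).trans hab.1.2⟩

theorem exists_sum_log_div_sq_le :
    ∃ C : ℝ, ∀ n : ℕ, ∑ d ∈ Finset.Icc 1 n, Real.log d / (d : ℝ) ^ 2 ≤ C := by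
  have hsummable : Summable fun n : ℕ => 2 * (1 / (n : ℝ) ^ (3 / 2 : ℝ)) :=
    (Real.summable_one_div_nat_rpow.2 (by norm_num)).mul_left 2
  refine ⟨∑' n : ℕ, 2 * (1 / (n : ℝ) ^ (3 / 2 : ℝ)), fun n =>
    (Finset.sum_le_sum fun d hd => ?_).trans
      (hsummable.sum_le_tsum (Finset.Icc 1 n) fun _ _ => by positivity)⟩
  have hd0 : (0 : ℝ) < d := by exact_mod_cast (Finset.mem_Icc.1 hd).1
  have hsplit : (d : ℝ) ^ 2 = (d : ℝ) ^ (1 / 2 : ℝ) * (d : ℝ) ^ (3 / 2 : ℝ) := by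
    rw [← Real.rpow_add hd0]
    norm_num
  calc Real.log d / (d : ℝ) ^ 2
      ≤ (d : ℝ) ^ (1 / 2 : ℝ) / (1 / 2) / (d : ℝ) ^ 2 := by
        gcongr
        exact Real.log_le_rpow_div hd0.le (by norm_num)
    _ = 2 * (1 / (d : ℝ) ^ (3 / 2 : ℝ)) := by
        rw [hsplit]
        field_simp

theorem abs_log_div_sub_le {n d : ℕ} (hd : 1 ≤ d) (hdn : d ≤ n) :
    |Real.log (n / d : ℕ) - (Real.log n - Real.log d)| ≤ 1 := by
  have hd0 : (0 : ℝ) < d := by exact_mod_cast hd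
  have hn0 : (0 : ℝ) < n := by exact_mod_cast hd.trans hdn
  have hq : 1 ≤ n / d := Nat.div_pos hdn hd
  have hq0 : (0 : ℝ) < (n / d : ℕ) := by exact_mod_cast hq
  have hle : Real.log (n / d : ℕ) ≤ Real.log (n / d) := Real.log_le_log hq0 Nat.cast_div_le
  have hge : Real.log (n / d) ≤ Real.log 2 + Real.log (n / d : ℕ) := by
    rw [← Real.log_mul two_ne_zero hq0.ne']
    refine Real.log_le_log (by positivity) ((div_le_iff₀ hd0).2 ?_)
    have : n ≤ 2 * (n / d) * d := by nlinarith [Nat.lt_div_mul_add (a := n) hd]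
    exact_mod_cast this
  rw [← Real.log_div hn0.ne' hd0.ne', abs_le]
  constructor <;> linarith [Real.log_two_lt_d9]

theorem exists_abs_sum_log_div_div_sq_sub_le : ∃ C : ℝ, ∀ n : ℕ, 1 ≤ n →
    |∑ d ∈ Finset.Icc 1 n, Real.log (n / d : ℕ) / (d : ℝ) ^ 2
      - Real.pi ^ 2 / 6 * Real.log n| ≤ C := by
  obtain ⟨C, hC⟩ := exists_sum_log_div_sq_le
  refine ⟨C + 3, fun n hn => ?_⟩
  have hn0 : (0 : ℝ) < n := by exact_mod_cast hn
  have hfloor : |∑ d ∈ Finset.Icc 1 n, Real.log (n / d : ℕ) / (d : ℝ) ^ 2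
      - ∑ d ∈ Finset.Icc 1 n, (Real.log n - Real.log d) / (d : ℝ) ^ 2| ≤ 2 := by
    rw [← Finset.sum_sub_distrib]
    refine (Finset.abs_sum_le_sum_abs _ _).trans (le_trans (Finset.sum_le_sum fun d hd => ?_)
      ((sum_one_div_sq_le n).trans (by linarith [pi_sq_div_six_lt])))
    obtain ⟨hd, hdn⟩ := Finset.mem_Icc.1 hd
    rw [← sub_div, abs_div, abs_of_nonneg (by positivity : 0 ≤ (d : ℝ) ^ 2)]
    gcongr
    exact abs_log_div_sub_le hd hdn
  have hexpand : ∑ d ∈ Finset.Icc 1 n, (Real.log n - Real.log d) / (d : ℝ) ^ 2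
      = Real.log n * ∑ d ∈ Finset.Icc 1 n, 1 / (d : ℝ) ^ 2
        - ∑ d ∈ Finset.Icc 1 n, Real.log d / (d : ℝ) ^ 2 := by
    simp only [sub_div, Finset.sum_sub_distrib, Finset.mul_sum, mul_one_div]
  have hlogsum : 0 ≤ ∑ d ∈ Finset.Icc 1 n, Real.log d / (d : ℝ) ^ 2 :=
    Finset.sum_nonneg fun d _ => div_nonneg (Real.log_natCast_nonneg d) (by positivity)
  have hlog : 0 ≤ Real.log n := Real.log_natCast_nonneg n
  have hlog_div : Real.log n * (1 / n) ≤ 1 := by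
    rw [mul_one_div, div_le_one hn0]
    linarith [Real.log_le_sub_one_of_pos hn0]
  rw [hexpand] at hfloor
  rw [abs_le] at *
  constructor <;>
    nlinarith [hC n, mul_le_mul_of_nonneg_left (sum_one_div_sq_le n) hlog,
      mul_le_mul_of_nonneg_left (le_sum_one_div_sq hn) hlog]

/-- The transform `h ↦ ∑ d, h (n / d) / d²` is boundedly invertible because the terms with
`d ≥ 2` have total weight `π² / 6 - 1 < 3 / 4`. -/
theorem abs_le_of_abs_sum_div_sq_le {h : ℕ → ℝ} {C : ℝ}
    (hC : ∀ n, 1 ≤ n → |∑ d ∈ Finset.Icc 1 n, h (n / d) / (d : ℝ) ^ 2| ≤ C)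
    (n : ℕ) (hn : 1 ≤ n) : |h n| ≤ 4 * C := by
  have hC0 : 0 ≤ C := (abs_nonneg _).trans (hC 1 le_rfl)
  induction n using Nat.strong_induction_on with
  | _ n ih =>
    have hIcc : Finset.Icc 1 n = insert 1 (Finset.Icc 2 n) :=
      (Finset.insert_Icc_add_one_left_eq_Icc hn).symm
    have hweight : ∑ d ∈ Finset.Icc 2 n, 1 / (d : ℝ) ^ 2 ≤ 3 / 4 := by
      have hsum := (sum_one_div_sq_le n).trans pi_sq_div_six_lt.le
      rw [hIcc, Finset.sum_insert (by simp)] at hsum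
      norm_num at hsum ⊢
      linarith
    have htail : |∑ d ∈ Finset.Icc 2 n, h (n / d) / (d : ℝ) ^ 2| ≤ 3 * C := by
      calc |∑ d ∈ Finset.Icc 2 n, h (n / d) / (d : ℝ) ^ 2|
          ≤ ∑ d ∈ Finset.Icc 2 n, 4 * C * (1 / (d : ℝ) ^ 2) := by
            refine (Finset.abs_sum_le_sum_abs _ _).trans (Finset.sum_le_sum fun d hd => ?_)
            obtain ⟨hd, hdn⟩ := Finset.mem_Icc.1 hd
            rw [abs_div, abs_of_nonneg (by positivity : 0 ≤ (d : ℝ) ^ 2), mul_one_div]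
            gcongr
            exact ih _ (Nat.div_lt_self (by omega) hd) (Nat.div_pos hdn (by omega))
        _ ≤ 3 * C := by
            rw [← Finset.mul_sum]
            nlinarith
    have hsum := hC n hn
    rw [hIcc, Finset.sum_insert (by simp)] at hsum
    simp only [Nat.div_one, Nat.cast_one, one_pow, div_one] at hsum
    rw [abs_le] at *
    constructor <;> linarith

theorem exists_abs_coprimeInvNormSqSum_sub_log_le : ∃ C : ℝ, 0 ≤ C ∧ ∀ n : ℕ, 1 ≤ n →
    |coprimeInvNormSqSum n - 3 / Real.pi * Real.log n| ≤ C := by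
  obtain ⟨C, hC⟩ := exists_abs_sum_log_div_div_sq_sub_le
  have hbound := abs_le_of_abs_sum_div_sq_le
    (h := fun n => coprimeInvNormSqSum n - 3 / Real.pi * Real.log n) (C := 4 + 3 / Real.pi * C) ?_
  · exact ⟨_, (abs_nonneg _).trans (hbound 1 le_rfl), hbound⟩
  intro n hn
  have hsplit : ∑ d ∈ Finset.Icc 1 n,
      (coprimeInvNormSqSum (n / d) - 3 / Real.pi * Real.log (n / d : ℕ)) / (d : ℝ) ^ 2
      = (boxInvNormSqSum n - Real.pi / 2 * Real.log n)
        - 3 / Real.pi * (∑ d ∈ Finset.Icc 1 n, Real.log (n / d : ℕ) / (d : ℝ) ^ 2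
          - Real.pi ^ 2 / 6 * Real.log n) := by
    rw [boxInvNormSqSum_eq_sum_coprimeInvNormSqSum]
    simp only [sub_div, Finset.sum_sub_distrib, mul_div_assoc, ← Finset.mul_sum]
    field_simp
    ring
  rw [hsplit]
  refine (abs_sub _ _).trans (add_le_add (abs_boxInvNormSqSum_sub_log_le hn) ?_)
  rw [abs_mul, abs_of_pos (by positivity)]
  gcongr
  exact hC n hn

end LatticeSums

section Quadruples

theorem card_Ioc_filter_modEq_le {a b m : ℤ} (hm : 0 < m) (hab : a ≤ b) (v : ℤ) :
    (({x ∈ Finset.Ioc a b | x ≡ v [ZMOD m]}.card : ℕ) : ℝ) ≤ (b - a : ℝ) / m + 1 := by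
  have hcard := Int.Ioc_filter_modEq_card a b hm v
  rw [max_eq_left (sub_nonneg.2 (by gcongr))] at hcard
  have hupper : (⌊(b - v) / (m : ℚ)⌋ : ℝ) ≤ (b - v) / m := by
    exact_mod_cast Int.floor_le ((b - v) / (m : ℚ))
  have hlower : (a - v) / m < (⌊(a - v) / (m : ℚ)⌋ : ℝ) + 1 := by
    exact_mod_cast Int.lt_floor_add_one ((a - v) / (m : ℚ))
  rw [← Int.cast_natCast, hcard, (by ring : (b - a : ℝ) / m = (b - v) / m - (a - v) / m)]
  push_cast
  linarith

theorem sub_one_le_card_Ioc_filter_modEq {m : ℤ} (hm : 0 < m) (a b v : ℤ) :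
    (b - a : ℝ) / m - 1 ≤ (({x ∈ Finset.Ioc a b | x ≡ v [ZMOD m]}.card : ℕ) : ℝ) := by
  have hcard := Int.Ioc_filter_modEq_card a b hm v
  have hupper : (b - v) / m < (⌊(b - v) / (m : ℚ)⌋ : ℝ) + 1 := by
    exact_mod_cast Int.lt_floor_add_one ((b - v) / (m : ℚ))
  have hlower : (⌊(a - v) / (m : ℚ)⌋ : ℝ) ≤ (a - v) / m := by
    exact_mod_cast Int.floor_le ((a - v) / (m : ℚ))
  rw [← Int.cast_natCast, hcard, (by ring : (b - a : ℝ) / m = (b - v) / m - (a - v) / m)]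
  push_cast
  exact le_max_of_le_left (by linarith)

theorem exists_dot_eq_iff_modEq {α β : ℤ} (h : Int.gcd α β = 1) (c : ℤ) :
    ∃ t₀ : ℤ, ∀ t, t ≡ t₀ [ZMOD α ^ 2 + β ^ 2] ↔
      ∃ γ δ, α * δ - β * γ = c ∧ α * γ + β * δ = t := by
  obtain ⟨p, q, hpq⟩ := Int.isCoprime_iff_gcd_eq_one.2 h
  refine ⟨c * (β * p - α * q), fun t => ⟨fun ht => ?_, ?_⟩⟩
  · obtain ⟨k, hk⟩ := Int.modEq_iff_dvd.1 ht.symm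
    exact ⟨k * α - c * q, k * β + c * p, by linear_combination c * hpq,
      by linear_combination -hk⟩
  · rintro ⟨γ, δ, hdet, rfl⟩
    refine (Int.modEq_iff_dvd.2 ⟨p * γ + q * δ, ?_⟩).symm
    linear_combination (β * p - α * q) * hdet + (-α * γ - β * δ) * hpq

theorem eq_of_det_eq_of_dot_eq {α β γ δ γ' δ' : ℤ} (h : 0 < α ^ 2 + β ^ 2)
    (hdet : α * δ - β * γ = α * δ' - β * γ') (hdot : α * γ + β * δ = α * γ' + β * δ') :
    γ = γ' ∧ δ = δ' :=
  ⟨mul_left_cancel₀ h.ne' (by linear_combination α * hdot - β * hdet),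
    mul_left_cancel₀ h.ne' (by linear_combination β * hdot + α * hdet)⟩

/-- An integer matrix `[[α, β], [γ, δ]]` of determinant two whose first row is a primitive vector
of the half-open quadrant and makes an acute angle with the second row. It encodes the symmetric
matrix `[[αγ, βγ + 1], [βγ + 1, βδ]]` of determinant `-1` and positive trace `αγ + βδ`. -/
structure IsDetTwoQuad (α β γ δ : ℤ) : Prop where
  fst_pos : 0 < α
  snd_nonneg : 0 ≤ β
  gcd_eq_one : Int.gcd α β = 1
  det_eq_two : α * δ - β * γ = 2
  dot_pos : 0 < α * γ + β * δ

/-- Exchanging the primitive directions of the two rows of a determinant-two quadruple gives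
another quadruple for the same conjugacy class; the reduced one has the shorter first row. -/
structure IsReducedQuad (α β γ δ : ℤ) : Prop extends IsDetTwoQuad α β γ δ where
  normSq_lt : (Int.gcd γ δ : ℤ) ^ 2 * (α ^ 2 + β ^ 2) < γ ^ 2 + δ ^ 2

namespace IsDetTwoQuad

variable {α β γ δ : ℤ} (h : IsDetTwoQuad α β γ δ)

include h

theorem normSq_pos : 0 < α ^ 2 + β ^ 2 := by
  have := h.fst_pos
  positivity

theorem normSq_mul_normSq :
    (α ^ 2 + β ^ 2) * (γ ^ 2 + δ ^ 2) = (α * γ + β * δ) ^ 2 + 4 := by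
  linear_combination (α * δ - β * γ + 2) * h.det_eq_two

theorem gcd_dvd_two : (Int.gcd γ δ : ℤ) ∣ 2 := by
  rw [← h.det_eq_two]
  exact dvd_sub (dvd_mul_of_dvd_right (Int.gcd_dvd_right ..) _)
    (dvd_mul_of_dvd_right (Int.gcd_dvd_left ..) _)

theorem gcd_pos : (0 : ℤ) < Int.gcd γ δ := by
  refine (Int.natCast_nonneg _).lt_of_ne fun hzero => ?_
  simpa [← hzero] using h.gcd_dvd_two

theorem isReducedQuad_of_two_mul_normSq_lt
    (hlt : 2 * (α ^ 2 + β ^ 2) < α * γ + β * δ) : IsReducedQuad α β γ δ := by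
  refine ⟨h, ?_⟩
  have hgcd : (Int.gcd γ δ : ℤ) ^ 2 ≤ 4 := by
    nlinarith [h.gcd_pos, Int.le_of_dvd two_pos h.gcd_dvd_two]
  have hnorm := h.normSq_pos
  refine lt_of_mul_lt_mul_left ?_ hnorm.le
  calc (α ^ 2 + β ^ 2) * ((Int.gcd γ δ : ℤ) ^ 2 * (α ^ 2 + β ^ 2))
      ≤ (α ^ 2 + β ^ 2) * (4 * (α ^ 2 + β ^ 2)) := by gcongr
    _ < (α * γ + β * δ) ^ 2 + 4 := by nlinarith
    _ = _ := h.normSq_mul_normSq.symm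

end IsDetTwoQuad

namespace IsReducedQuad

variable {α β γ δ : ℤ} (h : IsReducedQuad α β γ δ)

include h

theorem normSq_lt_normSq : α ^ 2 + β ^ 2 < γ ^ 2 + δ ^ 2 := by
  have hgcd : (1 : ℤ) ≤ (Int.gcd γ δ : ℤ) ^ 2 := by nlinarith [h.gcd_pos]
  nlinarith [h.normSq_lt, h.normSq_pos]

theorem normSq_le_dot_add_one : α ^ 2 + β ^ 2 ≤ α * γ + β * δ + 1 := by
  by_contra! hlt
  nlinarith [h.normSq_mul_normSq, h.normSq_lt_normSq, h.dot_pos]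

theorem normSq_snd_le : γ ^ 2 + δ ^ 2 ≤ (α * γ + β * δ) ^ 2 + 4 := by
  nlinarith [h.normSq_mul_normSq, h.normSq_pos, sq_nonneg γ, sq_nonneg δ]

end IsReducedQuad

open Classical in
/-- The reduced quadruples whose symmetric matrix has trace at most `K`. The box only serves to
make the set finite. -/
noncomputable def reducedQuads (K : ℕ) : Finset ((ℤ × ℤ) × ℤ × ℤ) :=
  let I := Finset.Icc (-(K : ℤ) - 3) (K + 3)
  {p ∈ (I ×ˢ I) ×ˢ I ×ˢ I | IsReducedQuad p.1.1 p.1.2 p.2.1 p.2.2 ∧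
    p.1.1 * p.2.1 + p.1.2 * p.2.2 ≤ K}

theorem mem_reducedQuads {K : ℕ} {α β γ δ : ℤ} :
    ((α, β), γ, δ) ∈ reducedQuads K ↔ IsReducedQuad α β γ δ ∧ α * γ + β * δ ≤ K := by
  simp only [reducedQuads, Finset.mem_filter, Finset.mem_product, Finset.mem_Icc,
    and_iff_right_iff_imp]
  rintro ⟨h, hK⟩
  have hfst := h.normSq_le_dot_add_one
  have hsnd := h.normSq_snd_le
  have hdot := h.dot_pos
  refine ⟨⟨⟨?_, ?_⟩, ?_, ?_⟩, ⟨?_, ?_⟩, ?_, ?_⟩ <;> nlinarith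

theorem card_reducedQuads_fiber_le (K : ℕ) {a b : ℕ} (ha : 1 ≤ a) (hab : a.gcd b = 1) :
    ({p ∈ reducedQuads K | p.1 = ((a : ℤ), (b : ℤ))}.card : ℝ) ≤ K * invNormSq a b + 1 := by
  have hnorm : (0 : ℤ) < (a : ℤ) ^ 2 + (b : ℤ) ^ 2 := by positivity
  obtain ⟨t₀, ht₀⟩ := exists_dot_eq_iff_modEq (α := a) (β := b) (by simpa using hab) 2
  calc ({p ∈ reducedQuads K | p.1 = ((a : ℤ), (b : ℤ))}.card : ℝ)
      ≤ ({t ∈ Finset.Ioc (0 : ℤ) K | t ≡ t₀ [ZMOD (a : ℤ) ^ 2 + (b : ℤ) ^ 2]}.card : ℝ) := by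
        norm_cast
        refine Finset.card_le_card_of_injOn (fun p => a * p.2.1 + b * p.2.2) ?_ ?_
        · rintro ⟨⟨α, β⟩, γ, δ⟩ hp
          simp only [Finset.coe_filter, Set.mem_ofPred_eq, mem_reducedQuads, Prod.mk.injEq] at hp
          obtain ⟨⟨hquad, hK⟩, rfl, rfl⟩ := hp
          simp only [Finset.coe_filter, Finset.mem_Ioc, Set.mem_ofPred_eq]
          exact ⟨⟨hquad.dot_pos, hK⟩, (ht₀ _).2 ⟨γ, δ, hquad.det_eq_two, rfl⟩⟩
        · rintro ⟨⟨α, β⟩, γ, δ⟩ hp ⟨⟨α', β'⟩, γ', δ'⟩ hp' hdot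
          simp only [Finset.coe_filter, Set.mem_ofPred_eq, mem_reducedQuads,
            Prod.mk.injEq] at hp hp' hdot ⊢
          obtain ⟨⟨hquad, -⟩, rfl, rfl⟩ := hp
          obtain ⟨⟨hquad', -⟩, rfl, rfl⟩ := hp'
          exact ⟨⟨rfl, rfl⟩, eq_of_det_eq_of_dot_eq hnorm
            (hquad.det_eq_two.trans hquad'.det_eq_two.symm) hdot⟩
    _ ≤ (K - 0 : ℝ) / ((a : ℝ) ^ 2 + (b : ℝ) ^ 2) + 1 := by
        exact_mod_cast card_Ioc_filter_modEq_le hnorm K.cast_nonneg t₀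
    _ = K * invNormSq a b + 1 := by rw [invNormSq, mul_one_div, sub_zero]

theorem le_card_reducedQuads_fiber (K : ℕ) {a b : ℕ} (ha : 1 ≤ a) (hab : a.gcd b = 1) :
    K * invNormSq a b - 3 ≤ ({p ∈ reducedQuads K | p.1 = ((a : ℤ), (b : ℤ))}.card : ℝ) := by
  set m : ℤ := (a : ℤ) ^ 2 + (b : ℤ) ^ 2 with hm
  have hnorm : 0 < m := by positivity
  obtain ⟨t₀, ht₀⟩ := exists_dot_eq_iff_modEq (α := a) (β := b) (by simpa using hab) 2
  calc (K * invNormSq a b - 3 : ℝ)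
      = (((K : ℤ) : ℝ) - ((2 * m : ℤ) : ℝ)) / (m : ℝ) - 1 := by
        have hcast : (a : ℝ) ^ 2 + (b : ℝ) ^ 2 = m := by simp [hm]
        have hm0 : (m : ℝ) ≠ 0 := by exact_mod_cast hnorm.ne'
        rw [invNormSq, hcast]
        push_cast
        field_simp
        ring
    _ ≤ ({t ∈ Finset.Ioc (2 * m) (K : ℤ) | t ≡ t₀ [ZMOD m]}.card : ℝ) :=
        sub_one_le_card_Ioc_filter_modEq hnorm _ _ _
    _ ≤ _ := by
        norm_cast
        refine Finset.card_le_card_of_surjOn (fun p => a * p.2.1 + b * p.2.2) ?_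
        intro t ht
        simp only [Finset.coe_filter, Finset.mem_Ioc, Set.mem_ofPred_eq] at ht
        obtain ⟨⟨hlt, hK⟩, hmod⟩ := ht
        obtain ⟨γ, δ, hdet, rfl⟩ := (ht₀ t).1 hmod
        have hquad : IsDetTwoQuad a b γ δ :=
          ⟨by exact_mod_cast ha, by positivity, by simpa using hab, hdet, by linarith⟩
        refine ⟨((a, b), γ, δ), ?_, rfl⟩
        simp only [Finset.coe_filter, Set.mem_ofPred_eq, mem_reducedQuads, and_true]
        exact ⟨hquad.isReducedQuad_of_two_mul_normSq_lt hlt, hK⟩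

theorem natAbs_mem_primitivePoints {K : ℕ} {p : (ℤ × ℤ) × ℤ × ℤ} (hp : p ∈ reducedQuads K) :
    (p.1.1.natAbs, p.1.2.natAbs) ∈ primitivePoints (Nat.sqrt (K + 1)) := by
  obtain ⟨⟨α, β⟩, γ, δ⟩ := p
  obtain ⟨hquad, hK⟩ := mem_reducedQuads.1 hp
  have hnorm : α.natAbs ^ 2 + β.natAbs ^ 2 ≤ K + 1 := by
    zify
    rw [sq_abs, sq_abs]
    linarith [hquad.normSq_le_dot_add_one]
  have hα := hquad.fst_pos
  simp only [mem_primitivePoints, Nat.le_sqrt']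
  exact ⟨⟨⟨by omega, by nlinarith⟩, by nlinarith⟩, hquad.gcd_eq_one⟩

theorem card_primitivePoints_le (n : ℕ) : (primitivePoints n).card ≤ n * (n + 1) :=
  (Finset.card_filter_le _ _).trans (by simp)

theorem abs_card_reducedQuads_sub_le (K : ℕ) :
    |((reducedQuads K).card : ℝ) - K * coprimeInvNormSqSum (Nat.sqrt (K + 1))|
      ≤ 3 * (primitivePoints (Nat.sqrt (K + 1))).card := by
  have hfiber : ∀ u ∈ primitivePoints (Nat.sqrt (K + 1)),
      |(({p ∈ reducedQuads K | (p.1.1.natAbs, p.1.2.natAbs) = u}.card : ℕ) : ℝ)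
        - K * invNormSq u.1 u.2| ≤ 3 := by
    rintro ⟨a, b⟩ hab
    obtain ⟨⟨⟨ha, -⟩, -⟩, hgcd⟩ := mem_primitivePoints.1 hab
    have hfilter : {p ∈ reducedQuads K | (p.1.1.natAbs, p.1.2.natAbs) = (a, b)}
        = {p ∈ reducedQuads K | p.1 = ((a : ℤ), (b : ℤ))} := by
      refine Finset.filter_congr ?_
      rintro ⟨⟨α, β⟩, γ, δ⟩ hp
      obtain ⟨hquad, -⟩ := mem_reducedQuads.1 hp
      have hα := hquad.fst_pos
      have hβ := hquad.snd_nonneg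
      simp only [Prod.mk.injEq]
      omega
    rw [hfilter, abs_le]
    constructor <;>
      linarith [card_reducedQuads_fiber_le K ha hgcd, le_card_reducedQuads_fiber K ha hgcd]
  rw [Finset.card_eq_sum_card_fiberwise fun p hp => natAbs_mem_primitivePoints hp,
    coprimeInvNormSqSum, Finset.mul_sum, Nat.cast_sum, ← Finset.sum_sub_distrib]
  refine (Finset.abs_sum_le_sum_abs _ _).trans ((Finset.sum_le_sum hfiber).trans_eq ?_)
  rw [Finset.sum_const, nsmul_eq_mul, mul_comm]

theorem abs_two_mul_log_sqrt_sub_log_le {K : ℕ} (hK : 1 ≤ K) :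
    |2 * Real.log (Nat.sqrt (K + 1)) - Real.log K| ≤ 2 := by
  set n := Nat.sqrt (K + 1)
  have hn0 : 0 < n := Nat.sqrt_pos.2 K.succ_pos
  have hnpos : (0 : ℝ) < n := by exact_mod_cast hn0
  have hKpos : (0 : ℝ) < K := by exact_mod_cast hK
  have hupper : (n : ℝ) ^ 2 ≤ 4 * K := by
    have : n ^ 2 ≤ 4 * K := (Nat.sqrt_le' (K + 1)).trans (by omega)
    exact_mod_cast this
  have hlower : (K : ℝ) ≤ 4 * n ^ 2 := by
    have : K ≤ 4 * n ^ 2 := by nlinarith [Nat.lt_succ_sqrt' (K + 1)]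
    exact_mod_cast this
  have hlog4 : Real.log 4 ≤ 2 := by
    rw [(by norm_num : (4 : ℝ) = 2 ^ 2), Real.log_pow]
    push_cast
    linarith [Real.log_two_lt_d9]
  have hlog_upper := Real.log_le_log (pow_pos hnpos 2) hupper
  have hlog_lower := Real.log_le_log hKpos hlower
  rw [Real.log_mul (by norm_num) (by positivity)] at hlog_upper hlog_lower
  rw [Real.log_pow] at hlog_upper hlog_lower
  push_cast at hlog_upper hlog_lower
  rw [abs_le]
  constructor <;> linarith

theorem exists_abs_card_reducedQuads_sub_mul_log_le : ∃ C : ℝ, 0 ≤ C ∧ ∀ K : ℕ, 1 ≤ K →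
    |((reducedQuads K).card : ℝ) - 3 / (2 * Real.pi) * K * Real.log K| ≤ C * K := by
  obtain ⟨C, hC0, hC⟩ := exists_abs_coprimeInvNormSqSum_sub_log_le
  refine ⟨12 + (C + 1), by linarith, fun K hK => ?_⟩
  have hcard := abs_card_reducedQuads_sub_le K
  have hlog := abs_two_mul_log_sqrt_sub_log_le hK
  have hn : 1 ≤ Nat.sqrt (K + 1) := Nat.sqrt_pos.2 K.succ_pos
  have hpoints : ((primitivePoints (Nat.sqrt (K + 1))).card : ℝ) ≤ 4 * K := by
    have : (primitivePoints (Nat.sqrt (K + 1))).card ≤ 4 * K :=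
      (card_primitivePoints_le _).trans (by nlinarith [Nat.sqrt_le' (K + 1)])
    exact_mod_cast this
  generalize Nat.sqrt (K + 1) = n at *
  have hpi : 3 / (2 * Real.pi) ≤ 1 / 2 := by
    rw [div_le_div_iff₀ (by positivity) (by positivity)]
    linarith [Real.pi_gt_three]
  have hsum : |coprimeInvNormSqSum n - 3 / (2 * Real.pi) * Real.log K| ≤ C + 1 := by
    have hsplit : coprimeInvNormSqSum n - 3 / (2 * Real.pi) * Real.log K
        = (coprimeInvNormSqSum n - 3 / Real.pi * Real.log n)
          + 3 / (2 * Real.pi) * (2 * Real.log n - Real.log K) := by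
      field_simp
      ring
    rw [hsplit]
    refine (abs_add_le _ _).trans (add_le_add (hC n hn) ?_)
    rw [abs_mul, abs_of_pos (by positivity)]
    nlinarith [abs_nonneg (2 * Real.log n - Real.log K)]
  have hsplit : ((reducedQuads K).card : ℝ) - 3 / (2 * Real.pi) * K * Real.log K
      = ((reducedQuads K).card - K * coprimeInvNormSqSum n)
        + K * (coprimeInvNormSqSum n - 3 / (2 * Real.pi) * Real.log K) := by ring
  rw [hsplit, add_mul]
  refine (abs_add_le _ _).trans (add_le_add (by linarith) ?_)
  rw [abs_mul, Nat.abs_cast, mul_comm]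
  gcongr

end Quadruples

section CommutingMatrices

variable {R : Type*} [CommRing R] {A B C : Matrix (Fin 2) (Fin 2) R}

theorem fin_two_entries_of_commute (h : Commute A B) :
    A 0 1 * B 1 0 = B 0 1 * A 1 0 ∧
      (A 0 0 - A 1 1) * B 0 1 = (B 0 0 - B 1 1) * A 0 1 ∧
      (A 0 0 - A 1 1) * B 1 0 = (B 0 0 - B 1 1) * A 1 0 := by
  have h00 := congr($(h.eq) 0 0)
  have h01 := congr($(h.eq) 0 1)
  have h10 := congr($(h.eq) 1 0)
  simp only [Matrix.mul_apply, Fin.sum_univ_two] at h00 h01 h10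
  exact ⟨by linear_combination h00, by linear_combination h01, by linear_combination -h10⟩

theorem exists_smul_eq_of_commute (hA : A.discr ≠ 0) (h : Commute A B) :
    ∃ n r s : R, n ≠ 0 ∧ n • B = r • 1 + s • A := by
  obtain ⟨h_off, h01, h10⟩ := fin_two_entries_of_commute h
  have hA' : A 0 1 ≠ 0 ∨ A 1 0 ≠ 0 ∨ A 0 0 - A 1 1 ≠ 0 := by
    by_contra! hzero
    obtain ⟨z01, -, zdiag⟩ := hzero
    apply hA
    rw [discr_fin_two, trace_fin_two, det_fin_two]
    linear_combination (A 0 0 - A 1 1) * zdiag + 4 * A 1 0 * z01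
  rcases hA' with hn | hn | hn
  · refine ⟨A 0 1, A 0 1 * B 0 0 - B 0 1 * A 0 0, B 0 1, hn, ?_⟩
    ext i j
    fin_cases i <;> fin_cases j <;> simp <;> grind
  · refine ⟨A 1 0, A 1 0 * B 0 0 - B 1 0 * A 0 0, B 1 0, hn, ?_⟩
    ext i j
    fin_cases i <;> fin_cases j <;> simp <;> grind
  · refine ⟨A 0 0 - A 1 1, (A 0 0 - A 1 1) * B 0 0 - (B 0 0 - B 1 1) * A 0 0,
      B 0 0 - B 1 1, hn, ?_⟩
    ext i j
    fin_cases i <;> fin_cases j <;> simp <;> grind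

theorem commute_of_commute_of_discr_ne_zero [IsDomain R] (hA : A.discr ≠ 0)
    (hB : Commute A B) (hC : Commute A C) : Commute B C := by
  obtain ⟨n, r, s, hn, hnB⟩ := exists_smul_eq_of_commute hA hB
  have hnBC : Commute (n • B) C := by
    rw [hnB]
    exact ((Commute.one_left C).smul_left r).add_left (hC.smul_left s)
  refine smul_right_injective _ hn ?_
  simpa only [smul_mul_assoc, mul_smul_comm] using hnBC.eq

theorem isSymm_of_commute_of_discr_ne_zero [IsDomain R] (hA : A.discr ≠ 0) (hAs : A.IsSymm)
    (hB : Commute A B) : B.IsSymm := by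
  obtain ⟨n, r, s, hn, hnB⟩ := exists_smul_eq_of_commute hA hB
  have hnBs : (n • B).IsSymm := by
    rw [hnB]
    exact (isSymm_one.smul r).add (hAs.smul s)
  refine smul_right_injective _ hn ?_
  simpa only [transpose_smul] using hnBs.eq

theorem two_mul_trace_mul_sub_sq_of_commute (h : Commute A B) :
    (2 * (A * B).trace - A.trace * B.trace) ^ 2 = A.discr * B.discr := by
  obtain ⟨h_off, -, h10⟩ := fin_two_entries_of_commute h
  simp only [discr_fin_two, trace_fin_two, det_fin_two, mul_apply, Fin.sum_univ_two]
  linear_combination (4 * ((B 0 0 - B 1 1) * A 0 1 - (A 0 0 - A 1 1) * B 0 1)) * h10 +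
    4 * (A 0 1 * B 1 0 - B 0 1 * A 1 0) * h_off

theorem discr_smul_one_add_smul (r s : R) (A : Matrix (Fin 2) (Fin 2) R) :
    (r • 1 + s • A).discr = s ^ 2 * A.discr := by
  simp [discr_fin_two, trace_fin_two, det_fin_two]
  ring

theorem eq_apply_smul_one_of_smul_eq_smul_one [IsDomain R] {n r : R} (hn : n ≠ 0)
    (h : n • A = r • 1) : A = A 0 0 • 1 := by
  have hentry (i j : Fin 2) : n * A i j = r * (1 : Matrix (Fin 2) (Fin 2) R) i j := congr($h i j)
  ext i j
  apply mul_left_cancel₀ hn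
  rw [hentry, Matrix.smul_apply, smul_eq_mul, ← mul_assoc, hentry, one_apply_eq, mul_one]

theorem trace_mul_add_trace_mul_adjugate (A B : Matrix (Fin 2) (Fin 2) R) :
    (A * B).trace + (A * B.adjugate).trace = A.trace * B.trace := by
  simp [trace_fin_two, adjugate_fin_two, mul_apply, Fin.sum_univ_two]
  ring

theorem mul_self_fin_two (A : Matrix (Fin 2) (Fin 2) R) :
    A * A = A.trace • A - A.det • 1 := by
  ext i j
  fin_cases i <;> fin_cases j <;>
    simp [trace_fin_two, det_fin_two, mul_apply, Fin.sum_univ_two] <;> ring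

end CommutingMatrices

section Centralizers

/-- Integral `2 × 2` matrices; those of determinant `1` and `-1` are the ones that matter. -/
abbrev M2Z := Matrix (Fin 2) (Fin 2) ℤ

theorem isHyperbolic_iff_two_lt_abs_trace {A : M2Z} (hA : A.det = 1) :
    A.IsHyperbolic ↔ 2 < |A.trace| := by
  rw [IsHyperbolic, discr_fin_two, hA, show (2 : ℤ) = |2| by rfl, ← sq_lt_sq]
  constructor <;> intro h <;> linarith

theorem mk_eq_mk_iff {A B : SL(2, ℤ)} :
    (QuotientGroup.mk A : PSL2Z) = QuotientGroup.mk B ↔ B = A ∨ B = -A := by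
  rw [QuotientGroup.eq]
  constructor
  · intro h
    obtain ⟨n, hn⟩ := Subgroup.mem_zpowers_iff.mp h
    have hB : B = A * (-1) ^ n := by rw [hn]; group
    rcases Int.even_or_odd n with heven | hodd
    · exact .inl (by rw [hB, heven.neg_one_zpow, mul_one])
    · exact .inr (by rw [hB, hodd.neg_one_zpow, mul_neg_one])
  · rintro (rfl | rfl)
    · simp [pmOne.one_mem]
    · rw [mul_neg, inv_mul_cancel]
      exact Subgroup.mem_zpowers _

theorem mk_neg (A : SL(2, ℤ)) : (QuotientGroup.mk (-A) : PSL2Z) = QuotientGroup.mk A :=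
  (mk_eq_mk_iff.2 (.inr rfl)).symm

theorem commute_coe_iff {A B : SL(2, ℤ)} : Commute A.1 B.1 ↔ Commute A B :=
  (Subtype.ext_iff (a1 := A * B) (a2 := B * A)).symm

theorem eq_apply_smul_one_of_commute_of_not_isHyperbolic {A B : M2Z} (hA : A.IsHyperbolic)
    (h : Commute A B) (hB : ¬ B.IsHyperbolic) : B = B 0 0 • 1 := by
  obtain ⟨n, r, s, hn, hnB⟩ := exists_smul_eq_of_commute (ne_of_gt hA) h
  have hdiscr : n ^ 2 * B.discr = s ^ 2 * A.discr := by
    rw [← discr_smul_one_add_smul r s, ← hnB, ← discr_smul_one_add_smul 0, zero_smul, zero_add]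
  have hs : s = 0 := by
    have hle : s ^ 2 * A.discr ≤ 0 :=
      hdiscr ▸ mul_nonpos_of_nonneg_of_nonpos (sq_nonneg n) (not_lt.1 hB)
    exact pow_eq_zero_iff two_ne_zero |>.1
      (le_antisymm (nonpos_of_mul_nonpos_left hle hA) (sq_nonneg s))
  rw [hs, zero_smul, add_zero] at hnB
  exact eq_apply_smul_one_of_smul_eq_smul_one hn hnB

theorem mk_eq_one_of_commute_of_not_isHyperbolic {A : M2Z} (hA : A.IsHyperbolic) {B : SL(2, ℤ)}
    (h : Commute A B.1) (hB : ¬ B.1.IsHyperbolic) : (QuotientGroup.mk B : PSL2Z) = 1 := by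
  have hscalar := eq_apply_smul_one_of_commute_of_not_isHyperbolic hA h hB
  have hsq : B.1 0 0 = 1 ∨ B.1 0 0 = -1 := by
    have hdet := B.2
    rw [hscalar, det_smul, det_one, Fintype.card_fin, mul_one] at hdet
    exact sq_eq_one_iff.1 hdet
  rw [← QuotientGroup.mk_one, eq_comm, mk_eq_mk_iff]
  refine hsq.imp (fun h1 => Subtype.ext ?_) (fun h1 => Subtype.ext ?_)
  · rw [hscalar, h1, one_smul]; rfl
  · rw [hscalar, h1, neg_smul, one_smul]; rfl

theorem abs_lt_of_add_eq_mul_of_mul_eq {t u p q : ℤ} (hu : 3 ≤ |u|) (htu : |u| ≤ |t|)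
    (hadd : p + q = t * u) (hmul : p * q = t ^ 2 + u ^ 2 - 4) : |p| < |t| ∨ |q| < |t| := by
  by_contra! hcon
  obtain ⟨hp, hq⟩ := hcon
  have hpq : 0 ≤ p * q := by rw [hmul]; nlinarith [sq_abs u, sq_abs t]
  have hadd' : |p| + |q| = |t| * |u| := by
    rw [← abs_mul, ← hadd]
    exact ((abs_add_eq_add_abs_iff p q).2 (mul_nonneg_iff.1 hpq)).symm
  have hmul' : |p| * |q| = |t| ^ 2 + |u| ^ 2 - 4 := by
    rw [← abs_mul, abs_of_nonneg hpq, hmul, sq_abs, sq_abs]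
  have hprod : (|p| - |t|) * (|q| - |t|) = (|u| - 2) * (|u| + 2 - |t| ^ 2) := by
    linear_combination hmul' - |t| * hadd'
  have hneg : |u| + 2 - |t| ^ 2 < 0 := by nlinarith
  nlinarith [mul_nonneg (sub_nonneg.2 hp) (sub_nonneg.2 hq)]

theorem trace_mul_add_trace_mul_inv (B C : SL(2, ℤ)) :
    (B * C).1.trace + (B * C⁻¹).1.trace = B.1.trace * C.1.trace :=
  trace_mul_add_trace_mul_adjugate B.1 C.1

theorem trace_mul_mul_trace_mul_inv_of_commute {B C : SL(2, ℤ)} (h : Commute B C) :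
    (B * C).1.trace * (B * C⁻¹).1.trace = B.1.trace ^ 2 + C.1.trace ^ 2 - 4 := by
  have hsq := two_mul_trace_mul_sub_sq_of_commute (commute_coe_iff.2 h)
  have hsum := trace_mul_add_trace_mul_inv B C
  rw [discr_fin_two, discr_fin_two, B.2, C.2, ← Matrix.SpecialLinearGroup.coe_mul] at hsq
  rw [eq_sub_of_add_eq' hsum]
  linarith

/-- One step of Euclid's algorithm on traces brings `B` closer to the powers of `B₀`. -/
theorem mk_mem_zpowers_of_forall_abs_trace_le {A B₀ : SL(2, ℤ)} (hA : A.1.IsHyperbolic)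
    (hB₀ : Commute A B₀) (hB₀hyp : B₀.1.IsHyperbolic)
    (hmin : ∀ D : SL(2, ℤ), Commute A D → D.1.IsHyperbolic → |B₀.1.trace| ≤ |D.1.trace|)
    {B : SL(2, ℤ)} (hB : Commute A B) :
    (QuotientGroup.mk B : PSL2Z) ∈ Subgroup.zpowers (QuotientGroup.mk B₀ : PSL2Z) := by
  induction hk : B.1.trace.natAbs using Nat.strong_induction_on generalizing B with
  | _ k ih =>
    by_cases hBhyp : B.1.IsHyperbolic
    · have hBB₀ : Commute B B₀ := commute_coe_iff.1 <| commute_of_commute_of_discr_ne_zero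
        (ne_of_gt hA) (commute_coe_iff.2 hB) (commute_coe_iff.2 hB₀)
      have hu : 3 ≤ |B₀.1.trace| := (isHyperbolic_iff_two_lt_abs_trace B₀.2).1 hB₀hyp
      have hmem := Subgroup.mem_zpowers (QuotientGroup.mk B₀ : PSL2Z)
      rcases abs_lt_of_add_eq_mul_of_mul_eq hu (hmin B hB hBhyp) (trace_mul_add_trace_mul_inv B B₀)
        (trace_mul_mul_trace_mul_inv_of_commute hBB₀) with hlt | hlt
      · have := ih _ (by subst hk; zify; exact hlt) (B := B * B₀) (hB.mul_right hB₀) rfl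
        rwa [QuotientGroup.mk_mul, Subgroup.mul_mem_cancel_right _ hmem] at this
      · have := ih _ (by subst hk; zify; exact hlt) (B := B * B₀⁻¹)
          (hB.mul_right hB₀.inv_right) rfl
        rwa [QuotientGroup.mk_mul, QuotientGroup.mk_inv,
          Subgroup.mul_mem_cancel_right _ (inv_mem hmem)] at this
    · rw [mk_eq_one_of_commute_of_not_isHyperbolic hA (commute_coe_iff.2 hB) hBhyp]
      exact one_mem _

theorem exists_forall_commute_mk_mem_zpowers {A : SL(2, ℤ)} (hA : A.1.IsHyperbolic) :
    ∃ B₀ : SL(2, ℤ), ∀ B : SL(2, ℤ), Commute A B →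
      (QuotientGroup.mk B : PSL2Z) ∈ Subgroup.zpowers (QuotientGroup.mk B₀ : PSL2Z) := by
  obtain ⟨B₀, ⟨hcomm, hhyp⟩, hmin⟩ := exists_minimalFor_of_wellFoundedLT
    (fun D : SL(2, ℤ) => Commute A D ∧ D.1.IsHyperbolic) (fun D => D.1.trace.natAbs)
    ⟨A, Commute.refl _, hA⟩
  refine ⟨B₀, fun B hB => mk_mem_zpowers_of_forall_abs_trace_le hA hcomm hhyp ?_ hB⟩
  intro D hD hDhyp
  simpa only [Int.abs_eq_natAbs, Nat.cast_le] using
    (le_total _ _).elim (hmin ⟨hD, hDhyp⟩) id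

theorem IsPrim.eq_one_or_eq_neg_one {g : PSL2Z} {k : ℤ} (h : IsPrim (g ^ k)) :
    k = 1 ∨ k = -1 := by
  by_contra! hk
  by_cases hk0 : k = 0
  · exact h ⟨1, 2, le_rfl, by simp [hk0]⟩
  rcases lt_or_gt_of_ne hk0 with hneg | hpos
  · exact h ⟨g⁻¹, k.natAbs, by omega, by
      rw [inv_pow, ← zpow_natCast, ← _root_.zpow_neg]; congr 1; omega⟩
  · exact h ⟨g, k.natAbs, by omega, by rw [← zpow_natCast]; congr 1; omega⟩

theorem exists_eq_zpow_or_eq_neg_zpow_of_commute {A B : SL(2, ℤ)} (hA : A.1.IsHyperbolic)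
    (hprim : IsPrim (QuotientGroup.mk A)) (h : Commute A B) :
    ∃ n : ℤ, B = A ^ n ∨ B = -A ^ n := by
  obtain ⟨B₀, hB₀⟩ := exists_forall_commute_mk_mem_zpowers hA
  obtain ⟨k, hk⟩ := hB₀ A (Commute.refl _)
  obtain ⟨m, hm⟩ := hB₀ B h
  have hmem : ∃ n : ℤ, (QuotientGroup.mk A : PSL2Z) ^ n = QuotientGroup.mk B := by
    dsimp only at hk hm
    rcases (hk ▸ hprim).eq_one_or_eq_neg_one with rfl | rfl
    · exact ⟨m, by rw [← hk, zpow_one, hm]⟩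
    · exact ⟨-m, by rw [← hk, ← hm]; group⟩
  obtain ⟨n, hn⟩ := hmem
  exact ⟨n, mk_eq_mk_iff.1 hn⟩

end Centralizers

section SquareRoots

theorem eq_zero_of_sq_add_four_eq_sq {w t : ℤ} (h : w ^ 2 + 4 = t ^ 2) : w = 0 := by
  have habs : |w| ^ 2 + 4 = |t| ^ 2 := by rwa [sq_abs, sq_abs]
  have hlt : |w| < |t| := by nlinarith [abs_nonneg w, abs_nonneg t]
  obtain ⟨d, hd⟩ : ∃ d, |t| = |w| + d := ⟨|t| - |w|, by ring⟩
  have hdvd : d * (2 * |w| + d) = 4 := by rw [hd] at habs; linarith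
  have hw := abs_nonneg w
  have hd1 : 1 ≤ d := by omega
  have hd2 : d ≤ 2 := by nlinarith
  rw [← abs_eq_zero]
  interval_cases d <;> omega

theorem trace_mul_self_of_det_eq_neg_one {R : Type*} [CommRing R] {G : Matrix (Fin 2) (Fin 2) R}
    (hG : G.det = -1) :
    (G * G).trace = G.trace ^ 2 + 2 := by
  rw [mul_self_fin_two, hG, trace_sub, trace_smul, trace_smul, trace_one, Fintype.card_fin]
  simp only [smul_eq_mul]
  ring

theorem trace_ne_zero_of_commute {A F : M2Z} (hA : A.det = 1) (hA_hyp : A.IsHyperbolic)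
    (hF : F.det = -1) (h : Commute A F) : F.trace ≠ 0 := by
  intro hF0
  have hsq : (A * F).trace ^ 2 + 4 = A.trace ^ 2 := by
    have := two_mul_trace_mul_sub_sq_of_commute h
    rw [discr_fin_two, discr_fin_two, hF0, hA, hF] at this
    linarith
  have hA_gt : 2 ^ 2 < A.trace ^ 2 :=
    sq_lt_sq.2 (by simpa using (isHyperbolic_iff_two_lt_abs_trace hA).1 hA_hyp)
  rw [eq_zero_of_sq_add_four_eq_sq hsq] at hsq
  omega

theorem coe_zpow (A : SL(2, ℤ)) (k : ℤ) : (A ^ k).1 = A.1 ^ k := by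
  have hinv : (A⁻¹).1 = A.1⁻¹ :=
    (inv_eq_left_inv (congr_arg Subtype.val (inv_mul_cancel A))).symm
  obtain ⟨m, rfl | rfl⟩ := k.eq_nat_or_neg
  · rw [zpow_natCast, zpow_natCast]; rfl
  · rw [_root_.zpow_neg, zpow_natCast, ← inv_pow, Matrix.zpow_neg_natCast, ← inv_pow', ← hinv]; rfl

/-- The sign is forced because squares of matrices of determinant `-1` have positive trace, and
`n` is odd because `F * F = 1` would force `F` to have trace zero. -/
theorem exists_mul_self_eq_of_mul_self_eq_zpow {D : SL(2, ℤ)} {G : M2Z} {n : ℤ}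
    (hD : 2 < D.1.trace) (hG : G.det = -1) (hDG : Commute D.1 G)
    (hn : G * G = D.1 ^ n ∨ G * G = -D.1 ^ n) :
    ∃ (k : ℤ) (F : M2Z), n = 2 * k + 1 ∧ F.det = -1 ∧ F * F = D.1 ∧ G = F * D.1 ^ k := by
  have hD_unit : IsUnit D.1.det := by rw [D.2]; exact isUnit_one
  have hD_hyp : D.1.IsHyperbolic := (isHyperbolic_iff_two_lt_abs_trace D.2).2 (lt_abs.2 (.inl hD))
  have hF_sq (k : ℤ) : G * D.1 ^ (-k) * (G * D.1 ^ (-k)) = D.1 ^ (n - 2 * k) ∨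
      G * D.1 ^ (-k) * (G * D.1 ^ (-k)) = -D.1 ^ (n - 2 * k) := by
    have hcomm : Commute (D.1 ^ (-k)) G := Matrix.Commute.zpow_left hDG _
    rw [hcomm.mul_mul_mul_comm, sub_eq_add_neg, two_mul, neg_add,
      Matrix.zpow_add hD_unit, Matrix.zpow_add hD_unit, ← neg_mul]
    exact hn.imp (congrArg (· * _)) (congrArg (· * _))
  have hF_det (k : ℤ) : (G * D.1 ^ (-k)).det = -1 := by
    rw [det_mul, hG, ← coe_zpow, (D ^ (-k)).2, mul_one]
  have hF_comm (k : ℤ) : Commute D.1 (G * D.1 ^ (-k)) :=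
    hDG.mul_right (Matrix.Commute.self_zpow _ _)
  have hF_tr (k : ℤ) : 2 < (G * D.1 ^ (-k) * (G * D.1 ^ (-k))).trace := by
    rw [trace_mul_self_of_det_eq_neg_one (hF_det k)]
    have := sq_pos_of_ne_zero (trace_ne_zero_of_commute D.2 hD_hyp (hF_det k) (hF_comm k))
    linarith
  obtain ⟨k, rfl | rfl⟩ := n.even_or_odd'
  · have htr := hF_tr k
    rcases hF_sq k with h | h <;> rw [h, sub_self, zpow_zero] at htr <;> norm_num at htr
  · refine ⟨k, G * D.1 ^ (-k), rfl, hF_det k, ?_, ?_⟩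
    · have htr := hF_tr k
      rcases hF_sq k with h | h <;> rw [h, add_sub_cancel_left, zpow_one] at htr ⊢
      rw [trace_neg] at htr
      omega
    · rw [Matrix.mul_assoc, Matrix.zpow_neg_mul_zpow_self k hD_unit, Matrix.mul_one]

end SquareRoots

section ReciprocalClasses

theorem exists_abs_add_mul_lt {a c : ℤ} (hc : c ≠ 0) (hca : |c| ≤ |a|) :
    ∃ k : ℤ, |a + k * c| < |a| := by
  refine ⟨-(a / c), lt_of_lt_of_le ?_ hca⟩
  rw [show a + -(a / c) * c = a % c by rw [Int.emod_def]; ring,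
    abs_of_nonneg (Int.emod_nonneg a hc)]
  exact Int.emod_lt_abs a hc

theorem coe_conj_eq (Q H : SL(2, ℤ)) : (Q * H * Q⁻¹).1 = Q.1 * H.1 * Q.1.adjugate := by
  rw [Matrix.SpecialLinearGroup.coe_mul, Matrix.SpecialLinearGroup.coe_mul,
    Matrix.SpecialLinearGroup.coe_inv]

theorem trace_conj_eq (Q H : SL(2, ℤ)) : (Q * H * Q⁻¹).1.trace = H.1.trace := by
  rw [Matrix.SpecialLinearGroup.coe_mul, trace_mul_comm, ← Matrix.SpecialLinearGroup.coe_mul,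
    ← mul_assoc, inv_mul_cancel, one_mul]

theorem trace_inv (A : SL(2, ℤ)) : (A⁻¹).1.trace = A.1.trace := by
  rw [Matrix.SpecialLinearGroup.coe_inv, adjugate_fin_two, trace_fin_two_of, trace_fin_two,
    add_comm]

theorem exists_conj_abs_apply_lt {H : SL(2, ℤ)} (htr : H.1.trace = 0) (h0 : H.1 0 0 ≠ 0) :
    ∃ Q : SL(2, ℤ), |(Q * H * Q⁻¹).1 0 0| < |H.1 0 0| := by
  have h11 : H.1 1 1 = -H.1 0 0 := by rw [trace_fin_two] at htr; linarith
  have hdet : H.1 0 1 * H.1 1 0 = -(H.1 0 0 ^ 2 + 1) := by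
    have := H.2
    rw [det_fin_two, h11] at this
    linarith
  have h01 : H.1 0 1 ≠ 0 := fun h => by rw [h] at hdet; nlinarith
  have h10 : H.1 1 0 ≠ 0 := fun h => by rw [h] at hdet; nlinarith
  have hle : |H.1 0 1| ≤ |H.1 0 0| ∨ |H.1 1 0| ≤ |H.1 0 0| := by
    by_contra! hlt
    have habs : |H.1 0 1| * |H.1 1 0| = |H.1 0 0| ^ 2 + 1 := by
      rw [← abs_mul, hdet, abs_neg, sq_abs, abs_of_pos (by positivity)]
    nlinarith [abs_pos.2 h0]
  rcases hle with hle | hle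
  · obtain ⟨k, hk⟩ := exists_abs_add_mul_lt h01 hle
    obtain ⟨Q, hQ⟩ : ∃ Q : SL(2, ℤ), Q.1 = !![1, 0; -k, 1] := ⟨⟨_, by simp⟩, rfl⟩
    refine ⟨Q, ?_⟩
    convert hk using 2
    rw [coe_conj_eq, hQ, adjugate_fin_two_of]
    simp [vecMul, dotProduct, mul_apply, mul_comm]
  · obtain ⟨k, hk⟩ := exists_abs_add_mul_lt h10 hle
    obtain ⟨Q, hQ⟩ : ∃ Q : SL(2, ℤ), Q.1 = !![1, k; 0, 1] := ⟨⟨_, by simp⟩, rfl⟩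
    refine ⟨Q, ?_⟩
    convert hk using 2
    rw [coe_conj_eq, hQ, adjugate_fin_two_of]
    simp [vecMul, dotProduct, mul_apply]

theorem eq_S_or_eq_neg_S {H : SL(2, ℤ)} (htr : H.1.trace = 0) (h0 : H.1 0 0 = 0) :
    H = ModularGroup.S ∨ H = -ModularGroup.S := by
  have h11 : H.1 1 1 = 0 := by rw [trace_fin_two, h0] at htr; linarith
  have hdet : H.1 0 1 * H.1 1 0 = -1 := by
    have := H.2
    rw [det_fin_two, h0] at this
    linarith
  have heta := eta_fin_two H.1
  rw [h0, h11] at heta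
  rcases Int.mul_eq_neg_one_iff_eq_one_or_neg_one.1 hdet with ⟨h01, h10⟩ | ⟨h01, h10⟩ <;>
    rw [h01, h10] at heta
  · exact .inr (Subtype.ext (by
      rw [heta, Matrix.SpecialLinearGroup.coe_neg, ModularGroup.coe_S, neg_of]; simp))
  · exact .inl (Subtype.ext heta)

theorem exists_conj_eq_S_or_eq_neg_S {H : SL(2, ℤ)} (htr : H.1.trace = 0) :
    ∃ Q : SL(2, ℤ), Q * H * Q⁻¹ = ModularGroup.S ∨ Q * H * Q⁻¹ = -ModularGroup.S := by
  induction hk : (H.1 0 0).natAbs using Nat.strong_induction_on generalizing H with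
  | _ k ih =>
    by_cases h0 : H.1 0 0 = 0
    · exact ⟨1, by simpa using eq_S_or_eq_neg_S htr h0⟩
    obtain ⟨P, hP⟩ := exists_conj_abs_apply_lt htr h0
    obtain ⟨Q, hQ⟩ := ih _ (by subst hk; zify; exact hP) (by rwa [trace_conj_eq]) rfl
    exact ⟨Q * P, by simpa only [_root_.mul_inv_rev, mul_assoc] using hQ⟩

theorem trace_eq_zero_of_conj_eq_inv {A H : SL(2, ℤ)} (hA : A.1.IsHyperbolic)
    (h : H * A * H⁻¹ = A⁻¹) : H.1.trace = 0 := by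
  have hHA : H * A = A⁻¹ * H := by rw [← h]; group
  have hsum := trace_mul_add_trace_mul_inv H A
  have hsum' := trace_mul_add_trace_mul_inv (H * A) A
  have htr : (H * A⁻¹).1.trace = (H * A).1.trace := by
    rw [hHA, Matrix.SpecialLinearGroup.coe_mul, trace_mul_comm, ← Matrix.SpecialLinearGroup.coe_mul]
  have htr' : (H * A * A).1.trace = H.1.trace := by
    rw [hHA, ← trace_conj_eq A⁻¹ H, inv_inv]
  rw [htr] at hsum
  rw [htr', mul_inv_cancel_right] at hsum'
  have hA_pos : 0 < A.1.trace ^ 2 - 4 := by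
    have : 0 < A.1.discr := hA
    rwa [discr_fin_two, A.2, mul_one] at this
  have hzero : H.1.trace * (A.1.trace ^ 2 - 4) = 0 := by
    linear_combination -2 * hsum' - A.1.trace * hsum
  exact (mul_eq_zero.1 hzero).resolve_right hA_pos.ne'

theorem S_conj_eq_inv_iff_isSymm {A : SL(2, ℤ)} :
    ModularGroup.S * A * ModularGroup.S⁻¹ = A⁻¹ ↔ A.1.IsSymm := by
  have hS : (ModularGroup.S * A).1 = !![-A.1 1 0, -A.1 1 1; A.1 0 0, A.1 0 1] := by
    rw [Matrix.SpecialLinearGroup.coe_mul, ModularGroup.coe_S, eta_fin_two A.1]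
    simp
  have hS' : (A⁻¹ * ModularGroup.S).1 = !![-A.1 0 1, -A.1 1 1; A.1 0 0, A.1 1 0] := by
    rw [Matrix.SpecialLinearGroup.coe_mul, Matrix.SpecialLinearGroup.coe_inv, ModularGroup.coe_S,
      adjugate_fin_two]
    simp
  rw [mul_inv_eq_iff_eq_mul, Matrix.IsSymm.ext_iff]
  refine (Subtype.ext_iff (a1 := ModularGroup.S * A) (a2 := A⁻¹ * ModularGroup.S)).trans ?_
  rw [hS, hS', ← Matrix.ext_iff]
  simp [Fin.forall_fin_two]

theorem exists_isConj_isSymm_of_isConj_inv {A : SL(2, ℤ)} (hA : A.1.IsHyperbolic)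
    (h : IsConj A A⁻¹) : ∃ B : SL(2, ℤ), IsConj A B ∧ B.1.IsSymm := by
  obtain ⟨H, hH⟩ := isConj_iff.1 h
  obtain ⟨Q, hQ⟩ := exists_conj_eq_S_or_eq_neg_S (trace_eq_zero_of_conj_eq_inv hA hH)
  have hconj : (Q * H * Q⁻¹) * (Q * A * Q⁻¹) * (Q * H * Q⁻¹)⁻¹ = (Q * A * Q⁻¹)⁻¹ :=
    calc _ = Q * (H * A * H⁻¹) * Q⁻¹ := by group
      _ = _ := by rw [hH]; group
  refine ⟨Q * A * Q⁻¹, isConj_iff.2 ⟨Q, rfl⟩, S_conj_eq_inv_iff_isSymm.1 ?_⟩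
  rcases hQ with hQ | hQ <;> rw [hQ] at hconj
  · exact hconj
  · have hneg : (-ModularGroup.S : SL(2, ℤ))⁻¹ = -ModularGroup.S⁻¹ := by
      rw [inv_eq_iff_mul_eq_one, neg_mul_neg, mul_inv_cancel]
    rwa [hneg, neg_mul, neg_mul_neg] at hconj

end ReciprocalClasses

section AmbiguousClasses

theorem isConj_mk_iff {A B : SL(2, ℤ)} :
    IsConj (QuotientGroup.mk A : PSL2Z) (QuotientGroup.mk B) ↔ IsConj A B ∨ IsConj A (-B) := by
  simp only [isConj_iff, ← exists_or]
  rw [QuotientGroup.mk_surjective.exists]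
  refine exists_congr fun g => ?_
  rw [← QuotientGroup.mk_mul, ← QuotientGroup.mk_inv, ← QuotientGroup.mk_mul, mk_eq_mk_iff,
    eq_comm, eq_comm (a := B), neg_eq_iff_eq_neg]

theorem trace_eq_of_isConj {A B : SL(2, ℤ)} (h : IsConj A B) : B.1.trace = A.1.trace := by
  obtain ⟨g, rfl⟩ := isConj_iff.1 h
  exact trace_conj_eq g A

theorem isConj_of_isConj_mk {A B : SL(2, ℤ)} (hA : 0 < A.1.trace) (hB : 0 < B.1.trace)
    (h : IsConj (QuotientGroup.mk A : PSL2Z) (QuotientGroup.mk B)) : IsConj A B := by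
  refine (isConj_mk_iff.1 h).resolve_right fun hneg => ?_
  have htr := trace_eq_of_isConj hneg
  rw [Matrix.SpecialLinearGroup.coe_neg, trace_neg] at htr
  omega

theorem IsHyp.exists_two_lt_trace {γ : PSL2Z} (h : IsHyp γ) :
    ∃ A : SL(2, ℤ), (QuotientGroup.mk A : PSL2Z) = γ ∧ 2 < A.1.trace := by
  obtain ⟨A, rfl, hA⟩ := h
  rcases lt_abs.1 hA with hA | hA
  · exact ⟨A, rfl, hA⟩
  · exact ⟨-A, mk_neg A, by rwa [Matrix.SpecialLinearGroup.coe_neg, trace_neg]⟩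

theorem IsPrim.of_isConj {γ δ : PSL2Z} (h : IsPrim γ) (hconj : IsConj γ δ) : IsPrim δ := by
  rintro ⟨ε, n, hn, hε⟩
  obtain ⟨c, hc⟩ := isConj_iff.1 hconj.symm
  exact h ⟨c * ε * c⁻¹, n, hn, by rw [conj_pow, hε, hc]⟩

theorem semiconjBy_coe {P A B : SL(2, ℤ)} (h : SemiconjBy P A B) : SemiconjBy P.1 A.1 B.1 :=
  congrArg Subtype.val h

theorem isConj_of_semiconjBy_coe {A B : SL(2, ℤ)} {P : M2Z} (hP : P.det = 1)
    (h : SemiconjBy P A.1 B.1) : IsConj A B :=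
  isConj_iff.2 ⟨⟨P, hP⟩, mul_inv_eq_iff_eq_mul.2 (Subtype.ext h)⟩

theorem det_Wmat : Wmat.det = -1 := by simp [Wmat]

theorem det_W1mat : W1mat.det = -1 := by simp [W1mat]

theorem semiconjBy_of_mul_mul_inv_eq {V B C : M2Z} (hV : V.det = -1) (h : V * B * V⁻¹ = C) :
    SemiconjBy V B C := by
  rw [SemiconjBy, ← h, nonsing_inv_mul_cancel_right V _ (by rw [hV]; exact isUnit_one.neg)]

theorem exists_semiconjBy_of_amb {D : SL(2, ℤ)} (h : Amb1 D ∨ Amb2 D) :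
    ∃ V : M2Z, V.det = -1 ∧ (SemiconjBy V D.1 (D⁻¹).1 ∨ SemiconjBy V D.1 (-(D⁻¹).1)) := by
  rcases h with h | h
  · exact ⟨Wmat, det_Wmat, h.imp (semiconjBy_of_mul_mul_inv_eq det_Wmat)
      (semiconjBy_of_mul_mul_inv_eq det_Wmat)⟩
  · exact ⟨W1mat, det_W1mat, h.imp (semiconjBy_of_mul_mul_inv_eq det_W1mat)
      (semiconjBy_of_mul_mul_inv_eq det_W1mat)⟩

theorem trace_eq_of_semiconjBy {V B C : M2Z} (hV : V.det = -1) (h : SemiconjBy V B C) :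
    C.trace = B.trace := by
  have hadj : V.adjugate * V = -1 := by rw [adjugate_mul, hV, neg_smul, one_smul]
  have hadj' : V * V.adjugate = -1 := by rw [mul_adjugate, hV, neg_smul, one_smul]
  have htr : (C * (V * V.adjugate)).trace = (B * (V.adjugate * V)).trace := by
    rw [← Matrix.mul_assoc, ← h.eq, Matrix.mul_assoc, trace_mul_comm, Matrix.mul_assoc]
  simpa [hadj, hadj'] using htr

theorem semiconjBy_inv_of_trace_ne_zero {V : M2Z} {D : SL(2, ℤ)} (hV : V.det = -1)
    (hD : D.1.trace ≠ 0) (h : SemiconjBy V D.1 (D⁻¹).1 ∨ SemiconjBy V D.1 (-(D⁻¹).1)) :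
    SemiconjBy V D.1 (D⁻¹).1 := by
  refine h.resolve_right fun hneg => hD ?_
  have htr := trace_eq_of_semiconjBy hV hneg
  rw [trace_neg, trace_inv] at htr
  omega

theorem exists_semiconjBy_inv_of_isConj {A D : SL(2, ℤ)} {V : M2Z} (hV : V.det = -1)
    (h : SemiconjBy V D.1 (D⁻¹).1) (hconj : IsConj A D) :
    ∃ R : M2Z, R.det = -1 ∧ SemiconjBy R A.1 (A⁻¹).1 := by
  obtain ⟨g, hg⟩ := isConj_iff.1 hconj
  have hgA : SemiconjBy g A D := by rw [SemiconjBy, ← hg, inv_mul_cancel_right]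
  refine ⟨(g⁻¹).1 * (V * g.1), by rw [det_mul, det_mul, hV, g.2, (g⁻¹).2]; rfl, ?_⟩
  exact (semiconjBy_coe hgA.inv_right.inv_symm_left).mul_left (h.mul_left (semiconjBy_coe hgA))

theorem exists_semiconjBy_inv_of_isConj_amb {A : SL(2, ℤ)} (hA : A.1.trace ≠ 0) {δ : PSL2Z}
    (hconj : IsConj (QuotientGroup.mk A) δ) (hδ : AmbFst δ ∨ AmbSnd δ) :
    ∃ R : M2Z, R.det = -1 ∧ SemiconjBy R A.1 (A⁻¹).1 := by
  obtain ⟨D, rfl, hD⟩ : ∃ D : SL(2, ℤ), (QuotientGroup.mk D : PSL2Z) = δ ∧ (Amb1 D ∨ Amb2 D) :=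
    hδ.elim (fun ⟨D, hD, h⟩ => ⟨D, hD, .inl h⟩) (fun ⟨D, hD, h⟩ => ⟨D, hD, .inr h⟩)
  obtain ⟨V, hV, hVD⟩ := exists_semiconjBy_of_amb hD
  rcases isConj_mk_iff.1 hconj with h | h
  · have hD_tr : D.1.trace ≠ 0 := by rwa [trace_eq_of_isConj h]
    exact exists_semiconjBy_inv_of_isConj hV (semiconjBy_inv_of_trace_ne_zero hV hD_tr hVD) h
  · have hD_tr : D.1.trace ≠ 0 := by
      rw [← trace_eq_of_isConj h, Matrix.SpecialLinearGroup.coe_neg, trace_neg, neg_ne_zero] at hA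
      exact hA
    refine exists_semiconjBy_inv_of_isConj hV ?_ h
    have hneg : (-D)⁻¹ = -D⁻¹ := by rw [inv_eq_iff_mul_eq_one, neg_mul_neg, mul_inv_cancel]
    rw [hneg, Matrix.SpecialLinearGroup.coe_neg, Matrix.SpecialLinearGroup.coe_neg]
    exact (semiconjBy_inv_of_trace_ne_zero hV hD_tr hVD).neg_right

/-- The square of an integer matrix of determinant `-1`, as an element of `SL(2, ℤ)`. The junk
value is `1`. -/
noncomputable def sqSL (G : M2Z) : SL(2, ℤ) :=
  if h : (G * G).det = 1 then ⟨G * G, h⟩ else 1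

theorem coe_sqSL {G : M2Z} (hG : G.det = -1) : (sqSL G).1 = G * G := by
  have hdet : (G * G).det = 1 := by rw [det_mul, hG]; rfl
  exact congrArg Subtype.val (dif_pos hdet)

theorem det_neg_fin_two (G : M2Z) : (-G).det = G.det := by
  rw [det_neg, Fintype.card_fin, neg_one_sq, one_mul]

theorem sqSL_neg {G : M2Z} (hG : G.det = -1) : sqSL (-G) = sqSL G :=
  Subtype.ext (by rw [coe_sqSL hG, coe_sqSL (by rwa [det_neg_fin_two]), neg_mul_neg])

/-- The symmetric integer matrices of determinant `-1` and positive trace. Their squares represent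
the ambiguous reciprocal classes. -/
structure IsPosSymmRoot (G : M2Z) : Prop where
  isSymm : G.IsSymm
  det_eq : G.det = -1
  trace_pos : 0 < G.trace

theorem trace_sqSL {G : M2Z} (hG : G.det = -1) : (sqSL G).1.trace = G.trace ^ 2 + 2 := by
  rw [coe_sqSL hG, trace_mul_self_of_det_eq_neg_one hG]

theorem exists_isPosSymmRoot_of_isSymm_of_semiconjBy {A : SL(2, ℤ)} {R : M2Z}
    (hA : 2 < A.1.trace) (hprim : IsPrim (QuotientGroup.mk A)) (hsymm : A.1.IsSymm)
    (hR : R.det = -1) (hRA : SemiconjBy R A.1 (A⁻¹).1) :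
    ∃ G : M2Z, IsPosSymmRoot G ∧ sqSL G = A := by
  have hA_hyp : A.1.IsHyperbolic := (isHyperbolic_iff_two_lt_abs_trace A.2).2 (lt_abs.2 (.inl hA))
  obtain ⟨P, hP, hPA⟩ : ∃ P : M2Z, P.det = -1 ∧ Commute A.1 P := by
    refine ⟨ModularGroup.S.1 * R, by rw [det_mul, hR, ModularGroup.S.2]; rfl, ?_⟩
    have hS : SemiconjBy ModularGroup.S A A⁻¹ :=
      mul_inv_eq_iff_eq_mul.1 (S_conj_eq_inv_iff_isSymm.2 hsymm)
    have hS' : SemiconjBy ModularGroup.S A⁻¹ A := by simpa using hS.inv_right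
    exact Commute.symm ((semiconjBy_coe hS').mul_left hRA)
  obtain ⟨n, hn⟩ : ∃ n : ℤ, P * P = A.1 ^ n ∨ P * P = -A.1 ^ n := by
    have hcomm : Commute A (sqSL P) := by
      rw [← commute_coe_iff, coe_sqSL hP]
      exact hPA.mul_right hPA
    obtain ⟨n, hn⟩ := exists_eq_zpow_or_eq_neg_zpow_of_commute hA_hyp hprim hcomm
    refine ⟨n, ?_⟩
    rw [← coe_sqSL hP, ← coe_zpow]
    exact hn.imp (congrArg _) (congrArg _)
  obtain ⟨k, F, -, hF, hFA, -⟩ := exists_mul_self_eq_of_mul_self_eq_zpow hA hP hPA hn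
  have hF_comm : Commute A.1 F := by rw [← hFA]; exact (Commute.refl F).mul_left (Commute.refl F)
  have hF_symm : F.IsSymm := isSymm_of_commute_of_discr_ne_zero hA_hyp.ne' hsymm hF_comm
  have hF_sq : sqSL F = A := Subtype.ext ((coe_sqSL hF).trans hFA)
  rcases (trace_ne_zero_of_commute A.2 hA_hyp hF hF_comm).lt_or_gt with h | h
  · exact ⟨-F, ⟨hF_symm.neg, by rwa [det_neg_fin_two], by rwa [trace_neg, neg_pos]⟩,
      by rw [sqSL_neg hF, hF_sq]⟩
  · exact ⟨F, ⟨hF_symm, hF, h⟩, hF_sq⟩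

theorem exists_isPosSymmRoot_isConj {γ δ : PSL2Z} (hprim : IsPrim γ) (hhyp : IsHyp γ)
    (hrec : IsConj γ γ⁻¹) (hconj : IsConj γ δ) (hδ : AmbFst δ ∨ AmbSnd δ) :
    ∃ G : M2Z, IsPosSymmRoot G ∧ IsConj γ (QuotientGroup.mk (sqSL G)) := by
  obtain ⟨A, rfl, hA⟩ := hhyp.exists_two_lt_trace
  have hA_inv : IsConj A A⁻¹ :=
    isConj_of_isConj_mk (by omega) (by rw [trace_inv]; omega) hrec
  obtain ⟨B, hAB, hB_symm⟩ := exists_isConj_isSymm_of_isConj_inv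
    ((isHyperbolic_iff_two_lt_abs_trace A.2).2 (lt_abs.2 (.inl hA))) hA_inv
  have hAB_mk : IsConj (QuotientGroup.mk A : PSL2Z) (QuotientGroup.mk B) :=
    isConj_mk_iff.2 (.inl hAB)
  have hB : 2 < B.1.trace := by rwa [trace_eq_of_isConj hAB]
  obtain ⟨R, hR, hRB⟩ :=
    exists_semiconjBy_inv_of_isConj_amb (by omega) (hAB_mk.symm.trans hconj) hδ
  obtain ⟨G, hG, rfl⟩ := exists_isPosSymmRoot_of_isSymm_of_semiconjBy hB (hprim.of_isConj hAB_mk)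
    hB_symm hR hRB
  exact ⟨G, hG, hAB_mk⟩

end AmbiguousClasses

section QuadMatrices

/-- The symmetric matrix of determinant `-1` encoded by a determinant-two quadruple: writing a
symmetric matrix as `!![x, y; y, z]`, the equation `x * z = (y - 1) * (y + 1)` is solved by
`x = α * γ`, `z = β * δ`, `y - 1 = β * γ` and `y + 1 = α * δ`. -/
def quadMatrix (α β γ δ : ℤ) : M2Z := !![α * γ, β * γ + 1; β * γ + 1, β * δ]

theorem trace_quadMatrix (α β γ δ : ℤ) :
    (quadMatrix α β γ δ).trace = α * γ + β * δ :=
  trace_fin_two_of _ _ _ _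

namespace IsDetTwoQuad

variable {α β γ δ : ℤ} (h : IsDetTwoQuad α β γ δ)
include h

theorem isPosSymmRoot : IsPosSymmRoot (quadMatrix α β γ δ) where
  isSymm := Matrix.IsSymm.ext (by simp [Fin.forall_fin_two, quadMatrix])
  det_eq := by
    rw [quadMatrix, det_fin_two_of]
    linear_combination (β * γ) * h.det_eq_two
  trace_pos := by
    rw [trace_quadMatrix]
    exact h.dot_pos

theorem trd_nonneg : 0 ≤ γ := by
  have hα := h.fst_pos
  have hβ := h.snd_nonneg
  have hdet := h.det_eq_two
  have hdot := h.dot_pos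
  by_contra! hγ
  have hβ_pos : 0 < β := hβ.lt_of_ne fun h0 => by rw [← h0] at hdot; nlinarith
  have hδ : 0 < δ := by by_contra! hδ; nlinarith
  have hβγ : -1 ≤ β * γ := by nlinarith
  obtain ⟨rfl, rfl⟩ : β = 1 ∧ γ = -1 := by constructor <;> nlinarith
  obtain rfl : α = 1 := by nlinarith
  omega

theorem fth_pos : 0 < δ := by
  have hβγ := mul_nonneg h.snd_nonneg h.trd_nonneg
  have hαδ : 0 < α * δ := by linarith [h.det_eq_two]
  exact pos_of_mul_pos_right hαδ h.fst_pos.le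

theorem eq_of_quadMatrix_eq {α' β' γ' δ' : ℤ} (h' : IsDetTwoQuad α' β' γ' δ')
    (heq : quadMatrix α β γ δ = quadMatrix α' β' γ' δ') :
    α = α' ∧ β = β' ∧ γ = γ' ∧ δ = δ' := by
  have hαγ : α * γ = α' * γ' := congrFun₂ heq 0 0
  have hβδ : β * δ = β' * δ' := congrFun₂ heq 1 1
  have hβγ : β * γ = β' * γ' := add_right_cancel (congrFun₂ heq 0 1)
  have hαδ : α * δ = α' * δ' := by linarith [h.det_eq_two, h'.det_eq_two]
  have hgcd : Int.gcd (α * δ) (β * δ) = Int.gcd (α' * δ') (β' * δ') := by rw [hαδ, hβδ]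
  rw [Int.gcd_mul_right, Int.gcd_mul_right, h.gcd_eq_one, h'.gcd_eq_one] at hgcd
  obtain rfl : δ = δ' := by have := h.fth_pos; have := h'.fth_pos; omega
  obtain rfl : α = α' := mul_right_cancel₀ h.fth_pos.ne' hαδ
  exact ⟨rfl, mul_right_cancel₀ h.fth_pos.ne' hβδ, mul_left_cancel₀ h.fst_pos.ne' hαγ, rfl⟩

theorem isReducedQuad_iff :
    IsReducedQuad α β γ δ ↔ (Int.gcd γ δ : ℤ) ^ 2 * (α ^ 2 + β ^ 2) < γ ^ 2 + δ ^ 2 :=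
  ⟨fun h' => h'.normSq_lt, fun hlt => ⟨h, hlt⟩⟩

theorem gcd_sq_mul_normSq_ne : (Int.gcd γ δ : ℤ) ^ 2 * (α ^ 2 + β ^ 2) ≠ γ ^ 2 + δ ^ 2 := by
  intro heq
  have hsq : (α * γ + β * δ) ^ 2 + 4 = (Int.gcd γ δ * (α ^ 2 + β ^ 2)) ^ 2 := by
    rw [← h.normSq_mul_normSq, ← heq]
    ring
  exact h.dot_pos.ne' (eq_zero_of_sq_add_four_eq_sq hsq)

end IsDetTwoQuad

/-- Conjugation by this matrix swaps the diagonal entries of a symmetric matrix. -/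
def swapMat : M2Z := !![0, 1; 1, 0]

theorem swapMat_mul_mul_swapMat (x y z : ℤ) :
    swapMat * !![x, y; y, z] * swapMat = !![z, y; y, x] := by
  simp [swapMat]

theorem Wmat_mul_mul_Wmat (x y z : ℤ) : Wmat * !![x, y; y, z] * Wmat = !![x, -y; -y, z] := by
  simp [Wmat]

theorem IsDetTwoQuad.exists_quadMatrix_eq_swap {α β γ δ : ℤ} (h : IsDetTwoQuad α β γ δ) :
    ∃ α' β' γ' δ' : ℤ, IsDetTwoQuad α' β' γ' δ' ∧
      (IsReducedQuad α' β' γ' δ' ↔ ¬IsReducedQuad α β γ δ) ∧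
      quadMatrix α' β' γ' δ' = swapMat * quadMatrix α β γ δ * swapMat := by
  have hg := h.gcd_pos
  have hnorm_ne := h.gcd_sq_mul_normSq_ne
  obtain ⟨γ₁, δ₁, hgcd, hγ, hδ⟩ := Int.exists_gcd_one (Int.natCast_pos.1 hg)
  set g : ℤ := (Int.gcd γ δ : ℤ)
  have hswap : IsDetTwoQuad δ₁ γ₁ (β * g) (α * g) :=
    { fst_pos := pos_of_mul_pos_left (hδ ▸ h.fth_pos) hg.le
      snd_nonneg := nonneg_of_mul_nonneg_left (hγ ▸ h.trd_nonneg) hg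
      gcd_eq_one := by rwa [Int.gcd_comm]
      det_eq_two := by linear_combination h.det_eq_two + β * hγ - α * hδ
      dot_pos := by linear_combination h.dot_pos + α * hγ + β * hδ }
  refine ⟨δ₁, γ₁, β * g, α * g, hswap, ?_, ?_⟩
  · have hgcd' : (Int.gcd (β * g) (α * g) : ℤ) = g := by
      rw [Int.gcd_mul_right, Int.gcd_comm, h.gcd_eq_one, one_mul, Int.natCast_natAbs,
        abs_of_pos hg]
    have hnorm : g ^ 2 * (δ₁ ^ 2 + γ₁ ^ 2) = γ ^ 2 + δ ^ 2 := by rw [hγ, hδ]; ring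
    have hnorm' : (β * g) ^ 2 + (α * g) ^ 2 = g ^ 2 * (α ^ 2 + β ^ 2) := by ring
    rw [hswap.isReducedQuad_iff, h.isReducedQuad_iff, hgcd', hnorm, hnorm', not_lt]
    exact ⟨le_of_lt, fun hle => hle.lt_of_ne hnorm_ne.symm⟩
  · have hβδ : δ₁ * (β * g) = β * δ := by rw [hδ]; ring
    have hβγ : γ₁ * (β * g) = β * γ := by rw [hγ]; ring
    have hαγ : γ₁ * (α * g) = α * γ := by rw [hγ]; ring
    rw [quadMatrix, quadMatrix, swapMat_mul_mul_swapMat, hβδ, hβγ, hαγ]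

theorem isConj_sqSL_mul_mul {V G : M2Z} (hV : V.det = -1) (hVV : V * V = 1) (hG : G.det = -1) :
    IsConj (sqSL G) (sqSL (V * G * V)) := by
  have hdet : (V * G).det = 1 := by rw [det_mul, hV, hG]; rfl
  have hdet' : (V * G * V).det = -1 := by rw [det_mul, hdet, hV]; rfl
  refine isConj_of_semiconjBy_coe hdet ?_
  rw [coe_sqSL hG, coe_sqSL hdet']
  calc V * G * (G * G) = V * G * (1 * G * (1 * G)) := by simp only [Matrix.one_mul]
    _ = V * G * V * (V * G * V) * (V * G) := by rw [← hVV]; simp only [Matrix.mul_assoc]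

theorem exists_quadMatrix_eq {x y z : ℤ} (h : IsPosSymmRoot !![x, y; y, z]) (hy : 0 < y) :
    ∃ α β γ δ : ℤ, IsDetTwoQuad α β γ δ ∧ quadMatrix α β γ δ = !![x, y; y, z] := by
  have hdet : x * z = (y - 1) * (y + 1) := by
    have := h.det_eq
    rw [det_fin_two_of] at this
    linarith
  have htr : 0 < x + z := by simpa only [trace_fin_two_of] using h.trace_pos
  have hz : 0 ≤ z := by by_contra! hz; nlinarith
  have hg : 0 < Int.gcd (y + 1) z := Int.gcd_pos_of_ne_zero_left _ (by omega)
  obtain ⟨α, β, hgcd, hα, hβ⟩ := Int.exists_gcd_one hg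
  set d : ℤ := (Int.gcd (y + 1) z : ℤ)
  have hd : 0 < d := Int.natCast_pos.2 hg
  have hα_pos : 0 < α := pos_of_mul_pos_left (by omega : 0 < α * d) hd.le
  have hαy : α * (y - 1) = x * β := by
    refine mul_right_cancel₀ hd.ne' ?_
    linear_combination x * hβ - (y - 1) * hα - hdet
  obtain ⟨γ, rfl⟩ : α ∣ x := Int.dvd_of_dvd_mul_left_of_gcd_one ⟨_, hαy.symm⟩ hgcd
  have hγ : y = β * γ + 1 := by
    refine mul_left_cancel₀ hα_pos.ne' ?_
    linear_combination hαy
  refine ⟨α, β, γ, d, ⟨hα_pos, nonneg_of_mul_nonneg_left (hβ ▸ hz) hd, hgcd, ?_, ?_⟩, ?_⟩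
  · linear_combination hγ - hα
  · rwa [← hβ]
  · rw [quadMatrix, ← hβ, ← hγ]

theorem det_swapMat : swapMat.det = -1 := by simp [swapMat]

theorem swapMat_mul_swapMat : swapMat * swapMat = 1 := by simp [swapMat, one_fin_two]

theorem Wmat_mul_Wmat : Wmat * Wmat = 1 := by simp [Wmat, one_fin_two]

theorem exists_isReducedQuad_isConj_of_pos {x y z : ℤ} (h : IsPosSymmRoot !![x, y; y, z])
    (hy : 0 < y) : ∃ α β γ δ : ℤ, IsReducedQuad α β γ δ ∧
      (quadMatrix α β γ δ).trace = x + z ∧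
      IsConj (sqSL !![x, y; y, z]) (sqSL (quadMatrix α β γ δ)) := by
  obtain ⟨α, β, γ, δ, hquad, hG⟩ := exists_quadMatrix_eq h hy
  by_cases hred : IsReducedQuad α β γ δ
  · exact ⟨α, β, γ, δ, hred, by rw [hG, trace_fin_two_of], by rw [hG]⟩
  obtain ⟨α', β', γ', δ', -, hred', hswap⟩ := hquad.exists_quadMatrix_eq_swap
  rw [hG] at hswap
  refine ⟨α', β', γ', δ', hred'.2 hred, ?_, ?_⟩
  · rw [hswap, swapMat_mul_mul_swapMat, trace_fin_two_of, add_comm]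
  · rw [hswap]
    exact isConj_sqSL_mul_mul det_swapMat swapMat_mul_swapMat h.det_eq

theorem IsPosSymmRoot.exists_isReducedQuad_isConj {G : M2Z} (h : IsPosSymmRoot G) :
    ∃ α β γ δ : ℤ, IsReducedQuad α β γ δ ∧ (quadMatrix α β γ δ).trace = G.trace ∧
      IsConj (sqSL G) (sqSL (quadMatrix α β γ δ)) := by
  obtain ⟨x, y, z, rfl⟩ : ∃ x y z, G = !![x, y; y, z] :=
    ⟨G 0 0, G 0 1, G 1 1, by nth_rw 3 [← h.isSymm.apply]; exact eta_fin_two G⟩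
  rw [trace_fin_two_of]
  rcases lt_trichotomy y 0 with hy | rfl | hy
  · have hneg : IsPosSymmRoot !![x, -y; -y, z] :=
      { isSymm := Matrix.IsSymm.ext (by simp [Fin.forall_fin_two])
        det_eq := by simpa using h.det_eq
        trace_pos := by simpa using h.trace_pos }
    obtain ⟨α, β, γ, δ, hred, htr, hconj⟩ :=
      exists_isReducedQuad_isConj_of_pos hneg (neg_pos.2 hy)
    refine ⟨α, β, γ, δ, hred, htr, IsConj.trans ?_ hconj⟩
    rw [← Wmat_mul_mul_Wmat]
    exact isConj_sqSL_mul_mul det_Wmat Wmat_mul_Wmat h.det_eq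
  · have hxz : x * z = -1 := by simpa using h.det_eq
    have htr : 0 < x + z := by simpa using h.trace_pos
    rcases Int.mul_eq_neg_one_iff_eq_one_or_neg_one.1 hxz with ⟨rfl, rfl⟩ | ⟨rfl, rfl⟩ <;> omega
  · exact exists_isReducedQuad_isConj_of_pos h hy

end QuadMatrices

section QuadClasses

theorem semiconjBy_of_semiconjBy_mul_self {G G' P : M2Z} (hG : G.det = -1) (hG' : G'.det = -1)
    (htr : G'.trace = G.trace) (hG_tr : G.trace ≠ 0) (h : SemiconjBy P (G * G) (G' * G')) :
    SemiconjBy P G G' := by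
  have hsmul : G.trace • (P * G) = G.trace • (G' * P) := by
    have := h.eq
    rw [mul_self_fin_two, mul_self_fin_two, hG, hG', htr] at this
    simpa only [mul_sub, sub_mul, mul_smul_comm, smul_mul_assoc, Matrix.mul_one, Matrix.one_mul,
      sub_left_inj] using this
  exact smul_right_injective M2Z hG_tr hsmul

theorem commute_transpose_mul_self {G G' P : M2Z} (hG : G.IsSymm) (hG' : G'.IsSymm)
    (h : SemiconjBy P G G') : Commute (Pᵀ * P) G := by
  have ht : G * Pᵀ = Pᵀ * G' := by
    simpa only [transpose_mul, hG.eq, hG'.eq] using congrArg Matrix.transpose h.eq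
  rw [Commute, SemiconjBy, Matrix.mul_assoc, h.eq, ← Matrix.mul_assoc, ← ht, Matrix.mul_assoc]

/-- With `PᵀP = ±G ^ (2 * n)`, the matrix `P * G ^ (-n)` is orthogonal; the minus sign is excluded
because Gram matrices have nonnegative diagonal. -/
theorem exists_transpose_mul_self_eq_one {G G' P : M2Z} {n : ℤ} (hG : G.IsSymm)
    (hG_det : G.det = -1) (h : SemiconjBy P G G')
    (hn : Pᵀ * P = (G * G) ^ n ∨ Pᵀ * P = -(G * G) ^ n) :
    ∃ Q : M2Z, Qᵀ * Q = 1 ∧ SemiconjBy Q G G' := by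
  have hunit : IsUnit G.det := by rw [hG_det]; exact isUnit_one.neg
  have hQ : (P * G ^ (-n))ᵀ * (P * G ^ (-n)) = G ^ (-n) * (Pᵀ * P) * G ^ (-n) := by
    rw [transpose_mul, (hG.zpow (-n)).eq]
    simp only [Matrix.mul_assoc]
  have hpow : G ^ (-n) * (G * G) ^ n * G ^ (-n) = 1 := by
    rw [← sq, ← zpow_natCast, ← Matrix.zpow_mul G hunit, ← Matrix.zpow_add hunit,
      ← Matrix.zpow_add hunit]
    convert zpow_zero G using 2
    push_cast
    ring
  refine ⟨P * G ^ (-n), ?_, h.mul_left (Matrix.Commute.zpow_self G (-n))⟩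
  rcases hn with hn | hn
  · rw [hQ, hn, hpow]
  · have hneg : (P * G ^ (-n))ᵀ * (P * G ^ (-n)) = -1 := by
      rw [hQ, hn, mul_neg, neg_mul, hpow]
    have hentry := congrFun₂ hneg 0 0
    simp only [mul_apply, transpose_apply, Fin.sum_univ_two, neg_apply, one_apply_eq] at hentry
    nlinarith [mul_self_nonneg ((P * G ^ (-n)) 0 0), mul_self_nonneg ((P * G ^ (-n)) 1 0)]

theorem IsPosSymmRoot.isHyperbolic_sqSL {G : M2Z} (h : IsPosSymmRoot G) :
    (sqSL G).1.IsHyperbolic := by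
  rw [isHyperbolic_iff_two_lt_abs_trace (sqSL G).2, trace_sqSL h.det_eq]
  exact lt_abs.2 (.inl (by nlinarith [h.trace_pos]))

theorem IsPosSymmRoot.exists_orthogonal_of_isConj {G G' : M2Z} (h : IsPosSymmRoot G)
    (h' : IsPosSymmRoot G') (hprim : IsPrim (QuotientGroup.mk (sqSL G)))
    (hconj : IsConj (QuotientGroup.mk (sqSL G) : PSL2Z) (QuotientGroup.mk (sqSL G'))) :
    ∃ Q : M2Z, Qᵀ * Q = 1 ∧ SemiconjBy Q G G' := by
  have hconj' : IsConj (sqSL G) (sqSL G') :=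
    isConj_of_isConj_mk (by rw [trace_sqSL h.det_eq]; positivity)
      (by rw [trace_sqSL h'.det_eq]; positivity) hconj
  have htr : G'.trace = G.trace := by
    have := trace_eq_of_isConj hconj'
    rw [trace_sqSL h.det_eq, trace_sqSL h'.det_eq] at this
    exact (pow_left_inj₀ h'.trace_pos.le h.trace_pos.le two_ne_zero).1 (by linarith)
  obtain ⟨P, hP⟩ := isConj_iff.1 hconj'
  have hPG : SemiconjBy P.1 G G' := by
    refine semiconjBy_of_semiconjBy_mul_self h.det_eq h'.det_eq htr h.trace_pos.ne' ?_
    rw [← coe_sqSL h.det_eq, ← coe_sqSL h'.det_eq]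
    exact semiconjBy_coe (mul_inv_eq_iff_eq_mul.1 hP)
  have hcomm := commute_transpose_mul_self h.isSymm h'.isSymm hPG
  obtain ⟨T, hT⟩ : ∃ T : SL(2, ℤ), T.1 = P.1ᵀ * P.1 :=
    ⟨⟨P.1ᵀ * P.1, by rw [det_mul, det_transpose, P.2, one_mul]⟩, rfl⟩
  have hT_comm : Commute (sqSL G) T := by
    rw [← commute_coe_iff, coe_sqSL h.det_eq, hT]
    exact (hcomm.mul_right hcomm).symm
  obtain ⟨n, hn⟩ := exists_eq_zpow_or_eq_neg_zpow_of_commute h.isHyperbolic_sqSL hprim hT_comm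
  refine exists_transpose_mul_self_eq_one (n := n) h.isSymm h.det_eq hPG ?_
  rw [← hT, ← coe_sqSL h.det_eq, ← coe_zpow]
  exact hn.imp (congrArg Subtype.val) (congrArg Subtype.val)

theorem eq_or_eq_of_sq_add_sq_eq_one {u v : ℤ} (h : u ^ 2 + v ^ 2 = 1) :
    (u = 1 ∨ u = -1) ∧ v = 0 ∨ u = 0 ∧ (v = 1 ∨ v = -1) := by
  have hu : -1 ≤ u ∧ u ≤ 1 := by constructor <;> nlinarith
  have hv : -1 ≤ v ∧ v ≤ 1 := by constructor <;> nlinarith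
  obtain ⟨hu₁, hu₂⟩ := hu
  obtain ⟨hv₁, hv₂⟩ := hv
  interval_cases u <;> interval_cases v <;> simp_all

theorem eq_or_swap_of_orthogonal {Q : M2Z} {x y z x' y' z' : ℤ} (hQ : Qᵀ * Q = 1)
    (h : SemiconjBy Q !![x, y; y, z] !![x', y'; y', z']) :
    (x' = x ∧ z' = z ∨ x' = z ∧ z' = x) ∧ (y' = y ∨ y' = -y) := by
  obtain ⟨a, b, c, d, rfl⟩ : ∃ a b c d, Q = !![a, b; c, d] := ⟨_, _, _, _, eta_fin_two Q⟩
  have h₀₀ : a ^ 2 + c ^ 2 = 1 := by simpa [mul_apply, sq] using congrFun₂ hQ 0 0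
  have h₀₁ : a * b + c * d = 0 := by simpa [mul_apply] using congrFun₂ hQ 0 1
  have h₁₁ : b ^ 2 + d ^ 2 = 1 := by simpa [mul_apply, sq] using congrFun₂ hQ 1 1
  have hsemi := h.eq
  simp only [mul_fin_two, EmbeddingLike.apply_eq_iff_eq, Matrix.vecCons_inj] at hsemi
  rcases eq_or_eq_of_sq_add_sq_eq_one h₀₀ with ⟨rfl | rfl, rfl⟩ | ⟨rfl, rfl | rfl⟩ <;>
    rcases eq_or_eq_of_sq_add_sq_eq_one h₁₁ with ⟨rfl | rfl, rfl⟩ | ⟨rfl, rfl | rfl⟩ <;>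
    simp_all

theorem IsReducedQuad.eq_of_isConj {α β γ δ α' β' γ' δ' : ℤ} (h : IsReducedQuad α β γ δ)
    (h' : IsReducedQuad α' β' γ' δ')
    (hprim : IsPrim (QuotientGroup.mk (sqSL (quadMatrix α β γ δ))))
    (hconj : IsConj (QuotientGroup.mk (sqSL (quadMatrix α β γ δ)) : PSL2Z)
      (QuotientGroup.mk (sqSL (quadMatrix α' β' γ' δ')))) :
    α = α' ∧ β = β' ∧ γ = γ' ∧ δ = δ' := by
  obtain ⟨Q, hQ, hQG⟩ :=
    h.isPosSymmRoot.exists_orthogonal_of_isConj h'.isPosSymmRoot hprim hconj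
  obtain ⟨hdiag, hoff⟩ := eq_or_swap_of_orthogonal hQ hQG
  have hoff' : β' * γ' + 1 = β * γ + 1 := by
    have := mul_nonneg h.snd_nonneg h.trd_nonneg
    have := mul_nonneg h'.snd_nonneg h'.trd_nonneg
    omega
  rcases hdiag with ⟨h₀₀, h₁₁⟩ | ⟨h₀₀, h₁₁⟩
  · exact h.eq_of_quadMatrix_eq h'.toIsDetTwoQuad (by simp only [quadMatrix, h₀₀, h₁₁, hoff'])
  · obtain ⟨α'', β'', γ'', δ'', hquad, hred, hswap⟩ := h.exists_quadMatrix_eq_swap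
    obtain ⟨rfl, rfl, rfl, rfl⟩ := hquad.eq_of_quadMatrix_eq h'.toIsDetTwoQuad (by
      rw [hswap, quadMatrix, swapMat_mul_mul_swapMat, quadMatrix, h₀₀, h₁₁, hoff'])
    exact absurd h (hred.1 h')

theorem IsPosSymmRoot.isHyp {G : M2Z} (h : IsPosSymmRoot G) :
    IsHyp (QuotientGroup.mk (sqSL G)) :=
  ⟨sqSL G, rfl, (isHyperbolic_iff_two_lt_abs_trace (sqSL G).2).1 h.isHyperbolic_sqSL⟩

theorem IsPosSymmRoot.isSymm_sqSL {G : M2Z} (h : IsPosSymmRoot G) : (sqSL G).1.IsSymm := by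
  rw [coe_sqSL h.det_eq, IsSymm, transpose_mul, h.isSymm.eq]

theorem IsPosSymmRoot.isConj_inv {G : M2Z} (h : IsPosSymmRoot G) :
    IsConj (QuotientGroup.mk (sqSL G) : PSL2Z) (QuotientGroup.mk (sqSL G))⁻¹ :=
  isConj_mk_iff.2 (.inl (isConj_iff.2 ⟨_, S_conj_eq_inv_iff_isSymm.2 h.isSymm_sqSL⟩))

theorem semiconjBy_inv_of_semiconjBy {P A B : SL(2, ℤ)} {R V : M2Z} (hAB : SemiconjBy P A B)
    (hRV : SemiconjBy P.1 R V) (hRA : SemiconjBy R A.1 (A⁻¹).1) : SemiconjBy V B.1 (B⁻¹).1 := by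
  have hV : P.1 * (R * (P⁻¹).1) = V := by
    have hP : P.1 * (P⁻¹).1 = 1 := congrArg Subtype.val (mul_inv_cancel P)
    rw [← Matrix.mul_assoc, hRV.eq, Matrix.mul_assoc, hP, Matrix.mul_one]
  rw [← hV]
  exact (semiconjBy_coe hAB.inv_right).mul_left
    (hRA.mul_left (semiconjBy_coe hAB.inv_symm_left))

theorem mul_mul_inv_eq_of_semiconjBy {V B C : M2Z} (hV : V.det = -1) (h : SemiconjBy V B C) :
    V * B * V⁻¹ = C := by
  rw [h.eq, mul_nonsing_inv_cancel_right V _ (by rw [hV]; exact isUnit_one.neg)]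

theorem exists_isConj_amb_of_semiconjBy {A : SL(2, ℤ)} {P R : M2Z} (hP : P.det = 1)
    (hRA : SemiconjBy R A.1 (A⁻¹).1)
    (hPR : SemiconjBy P R Wmat ∨ SemiconjBy P R W1mat) :
    ∃ δ : PSL2Z, IsConj (QuotientGroup.mk A) δ ∧ (AmbFst δ ∨ AmbSnd δ) := by
  obtain ⟨Q, rfl⟩ : ∃ Q : SL(2, ℤ), Q.1 = P := ⟨⟨P, hP⟩, rfl⟩
  have hQA : SemiconjBy Q A (Q * A * Q⁻¹) := by rw [SemiconjBy, inv_mul_cancel_right]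
  refine ⟨QuotientGroup.mk (Q * A * Q⁻¹), isConj_mk_iff.2 (.inl (isConj_iff.2 ⟨Q, rfl⟩)), ?_⟩
  refine hPR.imp (fun hW => ⟨_, rfl, .inl ?_⟩) (fun hW => ⟨_, rfl, .inl ?_⟩)
  · exact mul_mul_inv_eq_of_semiconjBy det_Wmat (semiconjBy_inv_of_semiconjBy hQA hW hRA)
  · exact mul_mul_inv_eq_of_semiconjBy det_W1mat (semiconjBy_inv_of_semiconjBy hQA hW hRA)

/-- The matrix `S⁻¹ * quadMatrix α β γ δ`, an involution when `α * δ - β * γ = 2`. -/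
def quadInvolution (α β γ δ : ℤ) : M2Z := !![β * γ + 1, β * δ; -(α * γ), -(β * γ + 1)]

namespace IsDetTwoQuad

variable {α β γ δ : ℤ} (h : IsDetTwoQuad α β γ δ)
include h

theorem semiconjBy_quadInvolution : SemiconjBy (quadInvolution α β γ δ)
    (sqSL (quadMatrix α β γ δ)).1 ((sqSL (quadMatrix α β γ δ))⁻¹).1 := by
  have hS : quadInvolution α β γ δ = (ModularGroup.S⁻¹).1 * quadMatrix α β γ δ := by
    rw [Matrix.SpecialLinearGroup.coe_inv, ModularGroup.coe_S, adjugate_fin_two]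
    simp [quadInvolution, quadMatrix]
  have hroot := h.isPosSymmRoot
  have hSA : SemiconjBy ModularGroup.S⁻¹ (sqSL (quadMatrix α β γ δ))
      (sqSL (quadMatrix α β γ δ))⁻¹ := by
    have : SemiconjBy ModularGroup.S (sqSL (quadMatrix α β γ δ)) (sqSL (quadMatrix α β γ δ))⁻¹ :=
      mul_inv_eq_iff_eq_mul.1 (S_conj_eq_inv_iff_isSymm.2 hroot.isSymm_sqSL)
    simpa using this.inv_right.inv_symm_left
  rw [hS]
  refine (semiconjBy_coe hSA).mul_left ?_
  rw [coe_sqSL hroot.det_eq]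
  exact (Commute.refl _).mul_right (Commute.refl _)

theorem even_fst_sub_trd_and_even_snd_sub_fth (hgcd : Int.gcd γ δ = 1) :
    Even (α - γ) ∧ Even (β - δ) := by
  have hdet : Even (α * δ - β * γ) := by rw [h.det_eq_two]; exact even_two
  have hαβ : ¬(Even α ∧ Even β) := fun ⟨hα, hβ⟩ => by
    have := Int.dvd_gcd hα.two_dvd hβ.two_dvd
    rw [h.gcd_eq_one] at this
    norm_num at this
  have hγδ : ¬(Even γ ∧ Even δ) := fun ⟨hγ, hδ⟩ => by
    have := Int.dvd_gcd hγ.two_dvd hδ.two_dvd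
    rw [hgcd] at this
    norm_num at this
  rw [Int.even_sub, Int.even_mul, Int.even_mul] at hdet
  rw [Int.even_sub, Int.even_sub]
  tauto

theorem exists_semiconjBy_quadInvolution : ∃ P : M2Z, P.det = 1 ∧
    (SemiconjBy P (quadInvolution α β γ δ) Wmat ∨
      SemiconjBy P (-quadInvolution α β γ δ) W1mat) := by
  have hdet := h.det_eq_two
  rcases (Nat.dvd_prime Nat.prime_two).1 (Int.natCast_dvd_natCast.1 h.gcd_dvd_two) with hgcd | hgcd
  · obtain ⟨⟨e₁, he₁⟩, e₂, he₂⟩ := h.even_fst_sub_trd_and_even_snd_sub_fth hgcd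
    obtain ⟨rfl, rfl⟩ : α = γ + 2 * e₁ ∧ β = δ + 2 * e₂ := by omega
    have hdet' : e₁ * δ - e₂ * γ = 1 := by linarith
    refine ⟨!![-γ, -δ; e₁, e₂], by rw [det_fin_two_of]; linarith, .inr ?_⟩
    refine (Matrix.ext_iff (M := _ * _)).1 ?_
    simp only [quadInvolution, W1mat, mul_apply, Fin.sum_univ_two, neg_apply, of_apply, cons_val',
      cons_val_zero, cons_val_one, cons_val_fin_one, Fin.forall_fin_two]
    refine ⟨⟨?_, ?_⟩, ?_, ?_⟩
    · linear_combination (-2 * γ) * hdet'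
    · ring
    · linear_combination (-γ) * hdet'
    · linear_combination (-(δ + 2 * e₂)) * hdet'
  · obtain ⟨c₁, rfl⟩ : (2 : ℤ) ∣ γ := by simpa [hgcd] using Int.gcd_dvd_left γ δ
    obtain ⟨c₂, rfl⟩ : (2 : ℤ) ∣ δ := by simpa [hgcd] using Int.gcd_dvd_right (2 * c₁) δ
    have hdet' : α * c₂ - β * c₁ = 1 := by linarith
    refine ⟨!![α, β; c₁, c₂], by rw [det_fin_two_of]; linarith, .inl ?_⟩
    refine (Matrix.ext_iff (M := _ * _)).1 ?_
    simp only [quadInvolution, Wmat, mul_apply, Fin.sum_univ_two, of_apply, cons_val',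
      cons_val_zero, cons_val_one, cons_val_fin_one, Fin.forall_fin_two]
    refine ⟨⟨?_, ?_⟩, ?_, ?_⟩
    · ring
    · linear_combination (2 * β) * hdet'
    · linear_combination (-2 * c₁) * hdet'
    · ring

theorem exists_isConj_amb : ∃ ε : PSL2Z,
    IsConj (QuotientGroup.mk (sqSL (quadMatrix α β γ δ))) ε ∧ (AmbFst ε ∨ AmbSnd ε) := by
  obtain ⟨P, hP, hW | hW⟩ := h.exists_semiconjBy_quadInvolution
  · exact exists_isConj_amb_of_semiconjBy hP h.semiconjBy_quadInvolution (.inl hW)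
  · exact exists_isConj_amb_of_semiconjBy hP h.semiconjBy_quadInvolution.neg_left (.inr hW)

end IsDetTwoQuad

end QuadClasses

section ImprimitiveClasses

theorem trace_pow_add_two {R : Type*} [CommRing R] {G : Matrix (Fin 2) (Fin 2) R}
    (hG : G.det = -1) (k : ℕ) :
    (G ^ (k + 2)).trace = G.trace * (G ^ (k + 1)).trace + (G ^ k).trace := by
  rw [pow_add, sq, mul_self_fin_two, hG, mul_sub, mul_smul_comm, ← pow_succ, neg_smul, one_smul,
    mul_neg, Matrix.mul_one, sub_neg_eq_add, trace_add, trace_smul, smul_eq_mul]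

section TraceGrowth

variable {G : M2Z} (hG : G.det = -1) (htr : 0 < G.trace)
include hG htr

theorem trace_pow_pos (k : ℕ) : 0 < (G ^ k).trace := by
  induction k using Nat.twoStepInduction with
  | zero => simp
  | one => simpa
  | more k ih₀ ih₁ => rw [trace_pow_add_two hG]; positivity

theorem trace_pow_le_trace_pow_add_two (k : ℕ) :
    (G ^ (k + 1)).trace + (G ^ k).trace ≤ (G ^ (k + 2)).trace := by
  rw [trace_pow_add_two hG]
  nlinarith [trace_pow_pos hG htr (k + 1)]

theorem two_mul_trace_pow_odd_le (j : ℕ) :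
    2 * (G ^ (2 * j + 1)).trace ≤ (G ^ (2 * (j + 1) + 1)).trace := by
  have h₀ := trace_pow_pos hG htr (2 * j)
  have h₁ := trace_pow_le_trace_pow_add_two hG htr (2 * j)
  have h₂ := trace_pow_le_trace_pow_add_two hG htr (2 * j + 1)
  rw [show 2 * (j + 1) + 1 = 2 * j + 1 + 2 by ring]
  linarith

theorem two_pow_le_trace_pow_odd (j : ℕ) : 2 ^ j ≤ (G ^ (2 * j + 1)).trace := by
  induction j with
  | zero => rw [pow_zero, mul_zero, zero_add, pow_one]; exact htr
  | succ j ih =>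
    rw [pow_succ]
    linarith [two_mul_trace_pow_odd_le hG htr j]

theorem trace_pow_three_le_trace_pow_odd {j : ℕ} (hj : 1 ≤ j) :
    G.trace ^ 3 ≤ (G ^ (2 * j + 1)).trace := by
  induction j, hj using Nat.le_induction with
  | base =>
    rw [show 2 * 1 + 1 = 1 + 2 by rfl, trace_pow_add_two hG, trace_pow_add_two hG]
    simp only [zero_add, pow_one, pow_zero, trace_one, Fintype.card_fin]
    nlinarith
  | succ j _ ih =>
    linarith [two_mul_trace_pow_odd_le hG htr j, trace_pow_pos hG htr (2 * j + 1)]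

end TraceGrowth

theorem isHyp_of_isHyp_pow {δ : PSL2Z} {n : ℕ} (h : IsHyp (δ ^ n)) : IsHyp δ := by
  obtain ⟨D, rfl⟩ := QuotientGroup.mk_surjective δ
  obtain ⟨A, hAD, hA⟩ := h
  rw [← isHyperbolic_iff_two_lt_abs_trace A.2] at hA
  have hcomm : Commute A.1 D.1 := by
    rw [commute_coe_iff]
    rw [← QuotientGroup.mk_pow, eq_comm, mk_eq_mk_iff] at hAD
    rcases hAD with rfl | rfl
    · exact (Commute.refl D).pow_left n
    · exact ((Commute.refl D).pow_left n).neg_left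
  refine ⟨D, rfl, (isHyperbolic_iff_two_lt_abs_trace D.2).1 ?_⟩
  by_contra hD
  have hA_one : (QuotientGroup.mk A : PSL2Z) = QuotientGroup.mk 1 := by
    rw [hAD, mk_eq_one_of_commute_of_not_isHyperbolic hA hcomm hD, one_pow, QuotientGroup.mk_one]
  rw [isHyperbolic_iff_two_lt_abs_trace A.2] at hA
  rw [eq_comm, mk_eq_mk_iff] at hA_one
  rcases hA_one with rfl | rfl <;> simp at hA

theorem IsPosSymmRoot.trace_pos_of_eq_pow_odd {G F : M2Z} (h : IsPosSymmRoot G) {j : ℕ}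
    (hF : F.det = -1) (hF_tr : F.trace ≠ 0) (hGF : G = F ^ (2 * j + 1)) : 0 < F.trace := by
  by_contra! hle
  have hpos := trace_pow_pos (G := -F) (by rwa [det_neg_fin_two])
    (by rw [trace_neg, neg_pos]; exact hle.lt_of_ne hF_tr) (2 * j + 1)
  rw [(odd_two_mul_add_one j).neg_pow, ← hGF, trace_neg] at hpos
  linarith [h.trace_pos]

theorem IsPosSymmRoot.discr_ne_zero {G : M2Z} (h : IsPosSymmRoot G) : G.discr ≠ 0 := by
  rw [discr_fin_two, h.det_eq]
  nlinarith [h.trace_pos]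

theorem IsPosSymmRoot.exists_eq_pow_of_not_isPrim {G : M2Z} (h : IsPosSymmRoot G)
    (hprim : ¬IsPrim (QuotientGroup.mk (sqSL G))) :
    ∃ (F : M2Z) (j : ℕ), IsPosSymmRoot F ∧ 1 ≤ j ∧ G = F ^ (2 * j + 1) := by
  obtain ⟨δ, n, hn, hδ⟩ := not_not.1 hprim
  obtain ⟨D, rfl, hD⟩ := (isHyp_of_isHyp_pow (hδ ▸ h.isHyp)).exists_two_lt_trace
  rw [← QuotientGroup.mk_pow, mk_eq_mk_iff] at hδ
  have hGG : G * G = D.1 ^ (n : ℤ) ∨ G * G = -D.1 ^ (n : ℤ) := by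
    rw [zpow_natCast, ← coe_sqSL h.det_eq]
    exact hδ.imp (congrArg Subtype.val) (congrArg Subtype.val)
  have hGA : Commute (sqSL G).1 G := by
    rw [coe_sqSL h.det_eq]
    exact (Commute.refl G).mul_left (Commute.refl G)
  have hDA : Commute (sqSL G).1 D.1 := by
    rw [commute_coe_iff]
    rcases hδ with hδ | hδ <;> rw [hδ]
    · exact (Commute.refl D).pow_left n
    · exact ((Commute.refl D).pow_left n).neg_left
  have hDG := commute_of_commute_of_discr_ne_zero h.isHyperbolic_sqSL.ne' hDA hGA
  obtain ⟨k, F, hk, hF, hFF, hGF⟩ := exists_mul_self_eq_of_mul_self_eq_zpow hD h.det_eq hDG hGG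
  lift k to ℕ using by omega
  have hpow : G = F ^ (2 * k + 1) := by
    rw [hGF, ← hFF, ← sq, zpow_natCast, ← pow_mul, ← pow_succ']
  have hF_comm : Commute G F := by rw [hpow]; exact (Commute.refl F).pow_left _
  have hF_tr : F.trace ≠ 0 := by
    intro hzero
    have := trace_mul_self_of_det_eq_neg_one hF
    rw [hFF, hzero] at this
    omega
  refine ⟨F, k, ⟨?_, hF, h.trace_pos_of_eq_pow_odd hF hF_tr hpow⟩, by omega, hpow⟩
  exact isSymm_of_commute_of_discr_ne_zero h.discr_ne_zero h.isSymm hF_comm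

theorem IsPosSymmRoot.sq_add_four_mul_sq {G : M2Z} (h : IsPosSymmRoot G) :
    (G 0 0 - G 1 1) ^ 2 + 4 * G 0 1 ^ 2 = G.trace ^ 2 + 4 := by
  have hdet := h.det_eq
  rw [det_fin_two, h.isSymm.apply 0 1] at hdet
  rw [trace_fin_two]
  linear_combination -4 * hdet

theorem IsPosSymmRoot.ext {F G : M2Z} (hF : IsPosSymmRoot F) (hG : IsPosSymmRoot G)
    (hdiag : F 0 0 - F 1 1 = G 0 0 - G 1 1) (hoff : F 0 1 = G 0 1) : F = G := by
  have htr : F.trace = G.trace := by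
    refine (pow_left_inj₀ hF.trace_pos.le hG.trace_pos.le two_ne_zero).1 ?_
    have hF_sq := hF.sq_add_four_mul_sq
    rw [hdiag, hoff, hG.sq_add_four_mul_sq] at hF_sq
    linarith
  rw [trace_fin_two, trace_fin_two] at htr
  rw [eta_fin_two F, eta_fin_two G, hF.isSymm.apply 0 1, hG.isSymm.apply 0 1, hoff,
    show F 0 0 = G 0 0 by omega, show F 1 1 = G 1 1 by omega]

theorem IsPosSymmRoot.mem_Icc_of_trace_le {G : M2Z} (h : IsPosSymmRoot G) {m : ℕ}
    (hm : G.trace ≤ m) :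
    (G 0 0 - G 1 1, G 0 1) ∈ Finset.Icc (-(m + 1) : ℤ) (m + 1) ×ˢ Finset.Icc (-m : ℤ) m := by
  have hsq := h.sq_add_four_mul_sq
  have hm_sq : G.trace ^ 2 ≤ (m : ℤ) ^ 2 := pow_le_pow_left₀ h.trace_pos.le hm 2
  have hm_pos : (1 : ℤ) ≤ m := by linarith [h.trace_pos]
  have hdiag : |G 0 0 - G 1 1| < (m : ℤ) + 2 := abs_lt_of_sq_lt_sq (by nlinarith) (by positivity)
  have hoff : |G 0 1| < (m : ℤ) + 1 := abs_lt_of_sq_lt_sq (by nlinarith) (by positivity)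
  rw [abs_lt] at hdiag hoff
  simp only [Finset.mem_product, Finset.mem_Icc]
  omega

/-- The element of `PSL₂(ℤ)` represented by a quadruple. -/
noncomputable def quadElt (p : (ℤ × ℤ) × ℤ × ℤ) : PSL2Z :=
  QuotientGroup.mk (sqSL (quadMatrix p.1.1 p.1.2 p.2.1 p.2.2))

theorem IsPosSymmRoot.trace_le_and_lt_of_pow_odd {F : M2Z} (h : IsPosSymmRoot F) {j K : ℕ}
    (hj : 1 ≤ j) (hK : (F ^ (2 * j + 1)).trace ≤ K) :
    F.trace ≤ Nat.nthRoot 3 K ∧ j < 3 * Nat.nthRoot 3 K + 1 := by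
  have hm : K < (Nat.nthRoot 3 K + 1) ^ 3 := Nat.lt_pow_nthRoot_add_one three_ne_zero K
  constructor
  · have hcube : F.trace ^ 3 ≤ K :=
      (trace_pow_three_le_trace_pow_odd h.det_eq h.trace_pos hj).trans hK
    have hlt : F.trace ^ 3 < (Nat.nthRoot 3 K + 1 : ℤ) ^ 3 := hcube.trans_lt (by exact_mod_cast hm)
    exact Int.lt_add_one_iff.1 (lt_of_pow_lt_pow_left₀ 3 (by positivity) hlt)
  · have hpow : 2 ^ j ≤ K := by
      exact_mod_cast (two_pow_le_trace_pow_odd h.det_eq h.trace_pos j).trans hK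
    have hlt : 2 ^ j < 2 ^ (3 * Nat.nthRoot 3 K) := calc
      2 ^ j ≤ K := hpow
      _ < (Nat.nthRoot 3 K + 1) ^ 3 := hm
      _ ≤ (2 ^ Nat.nthRoot 3 K) ^ 3 := Nat.pow_le_pow_left Nat.lt_two_pow_self 3
      _ = 2 ^ (3 * Nat.nthRoot 3 K) := by rw [← pow_mul, mul_comm]
    exact ((Nat.pow_lt_pow_iff_right one_lt_two).1 hlt).trans (Nat.lt_succ_self _)

theorem exists_injOn_filter_not_isPrim (K : ℕ) :
    ∃ f : (ℤ × ℤ) × ℤ × ℤ → (ℤ × ℤ) × ℕ,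
      Set.InjOn f {p | p ∈ reducedQuads K ∧ ¬IsPrim (quadElt p)} ∧
      ∀ p ∈ reducedQuads K, ¬IsPrim (quadElt p) →
        f p ∈ (Finset.Icc (-(Nat.nthRoot 3 K + 1) : ℤ) (Nat.nthRoot 3 K + 1) ×ˢ
          Finset.Icc (-Nat.nthRoot 3 K : ℤ) (Nat.nthRoot 3 K)) ×ˢ
            Finset.range (3 * Nat.nthRoot 3 K + 1) := by
  have hroot (p : (ℤ × ℤ) × ℤ × ℤ) : ∃ (F : M2Z) (j : ℕ),
      p ∈ reducedQuads K ∧ ¬IsPrim (quadElt p) → IsPosSymmRoot F ∧ 1 ≤ j ∧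
        quadMatrix p.1.1 p.1.2 p.2.1 p.2.2 = F ^ (2 * j + 1) := by
    by_cases hp : p ∈ reducedQuads K ∧ ¬IsPrim (quadElt p)
    · obtain ⟨F, j, h⟩ :=
        (mem_reducedQuads.1 hp.1).1.isPosSymmRoot.exists_eq_pow_of_not_isPrim hp.2
      exact ⟨F, j, fun _ => h⟩
    · exact ⟨0, 0, fun h => absurd h hp⟩
  choose F j hFj using hroot
  refine ⟨fun p => ((F p 0 0 - F p 1 1, F p 0 1), j p), fun p hp q hq hpq => ?_,
    fun p hp hprim => ?_⟩
  · obtain ⟨hFp, -, hp_eq⟩ := hFj p hp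
    obtain ⟨hFq, -, hq_eq⟩ := hFj q hq
    simp only [Prod.mk.injEq] at hpq
    obtain ⟨⟨hdiag, hoff⟩, hj⟩ := hpq
    rw [hFp.ext hFq hdiag hoff, hj, ← hq_eq] at hp_eq
    obtain ⟨h₁, h₂, h₃, h₄⟩ := (mem_reducedQuads.1 hp.1).1.eq_of_quadMatrix_eq
      (mem_reducedQuads.1 hq.1).1.toIsDetTwoQuad hp_eq
    exact Prod.ext (Prod.ext h₁ h₂) (Prod.ext h₃ h₄)
  · obtain ⟨hF, hj, heq⟩ := hFj p ⟨hp, hprim⟩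
    have htr : (F p ^ (2 * j p + 1)).trace ≤ K := by
      rw [← heq, trace_quadMatrix]
      exact (mem_reducedQuads.1 hp).2
    obtain ⟨hF_le, hj_lt⟩ := hF.trace_le_and_lt_of_pow_odd hj htr
    exact Finset.mem_product.2 ⟨hF.mem_Icc_of_trace_le hF_le, Finset.mem_range.2 hj_lt⟩

open Classical in
theorem card_filter_not_isPrim_le {K : ℕ} (hK : 1 ≤ K) :
    (Finset.card {p ∈ reducedQuads K | ¬IsPrim (quadElt p)}) ≤ 60 * K := by
  obtain ⟨f, hinj, hmaps⟩ := exists_injOn_filter_not_isPrim K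
  set m := Nat.nthRoot 3 K
  have hm_one : 1 ≤ m := (Nat.le_nthRoot_iff three_ne_zero).2 (by simpa using hK)
  have hm_cube : m ^ 3 ≤ K := (Nat.le_nthRoot_iff three_ne_zero).1 le_rfl
  calc Finset.card {p ∈ reducedQuads K | ¬IsPrim (quadElt p)}
      ≤ _ := Finset.card_le_card_of_injOn f
        (fun p hp => hmaps p (Finset.mem_filter.1 hp).1 (Finset.mem_filter.1 hp).2)
        (by simpa only [Finset.coe_filter] using hinj)
    _ = (2 * m + 3) * (2 * m + 1) * (3 * m + 1) := by
      rw [Finset.card_product, Finset.card_product, Int.card_Icc, Int.card_Icc, Finset.card_range]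
      congr 2 <;> omega
    _ ≤ 60 * m ^ 3 := by
      have hsq : m ≤ m ^ 2 := Nat.le_self_pow two_ne_zero m
      have hcube : m ^ 2 ≤ m ^ 3 := Nat.pow_le_pow_right hm_one (by norm_num)
      nlinarith
    _ ≤ 60 * K := Nat.mul_le_mul_left 60 hm_cube

end ImprimitiveClasses

section Counting

theorem abs_trace_eq_of_isConj_mk {A B : SL(2, ℤ)}
    (h : IsConj (QuotientGroup.mk A : PSL2Z) (QuotientGroup.mk B)) :
    |A.1.trace| = |B.1.trace| := by
  rcases isConj_mk_iff.1 h with h | h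
  · rw [trace_eq_of_isConj h]
  · rw [← trace_eq_of_isConj h, Matrix.SpecialLinearGroup.coe_neg, trace_neg, abs_neg]

theorem two_mul_arcosh_le_iff {t s : ℝ} (ht : 0 < t) :
    2 * arcosh ((t ^ 2 + 2) / 2) ≤ s ↔ (t + √(t ^ 2 + 4)) / 2 ≤ Real.exp (s / 4) := by
  have hsqrt : √(((t ^ 2 + 2) / 2) ^ 2 - 1) = t * √(t ^ 2 + 4) / 2 := by
    rw [show ((t ^ 2 + 2) / 2) ^ 2 - 1 = (t / 2) ^ 2 * (t ^ 2 + 4) by ring,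
      Real.sqrt_mul (by positivity), Real.sqrt_sq (by positivity)]
    ring
  have hsq : (t ^ 2 + 2) / 2 + t * √(t ^ 2 + 4) / 2 = ((t + √(t ^ 2 + 4)) / 2) ^ 2 := by
    linear_combination (-1 / 4) * Real.sq_sqrt (show 0 ≤ t ^ 2 + 4 by positivity)
  rw [arcosh, hsqrt, hsq, Real.log_pow, ← Real.log_le_iff_le_exp (by positivity), Nat.cast_ofNat]
  constructor <;> intro h <;> linarith

theorem le_exp_of_two_mul_arcosh_le {t s : ℝ} (ht : 0 < t)
    (h : 2 * arcosh ((t ^ 2 + 2) / 2) ≤ s) : t ≤ Real.exp (s / 4) := by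
  rw [two_mul_arcosh_le_iff ht] at h
  have : t ≤ √(t ^ 2 + 4) := Real.le_sqrt_of_sq_le (by linarith)
  linarith

theorem two_mul_arcosh_le_of_add_one_le_exp {t s : ℝ} (ht : 0 < t)
    (h : t + 1 ≤ Real.exp (s / 4)) : 2 * arcosh ((t ^ 2 + 2) / 2) ≤ s := by
  rw [two_mul_arcosh_le_iff ht]
  have : √(t ^ 2 + 4) ≤ t + 2 := (Real.sqrt_le_left (by linarith)).2 (by nlinarith)
  linarith

/-- The set of conjugacy classes counted by `NAmbRec s`. -/
def ambRecClasses (s : ℝ) : Set (ConjClasses PSL2Z) :=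
  {C | ∃ γ : PSL2Z, ConjClasses.mk γ = C ∧
    IsPrim γ ∧ IsHyp γ ∧ TransLenLE γ s ∧ IsConj γ γ⁻¹ ∧
    ∃ δ : PSL2Z, IsConj γ δ ∧ (AmbFst δ ∨ AmbSnd δ)}

theorem nAmbRec_eq_ncard (s : ℝ) : NAmbRec s = (ambRecClasses s).ncard := rfl

theorem IsPosSymmRoot.trace_le_exp {G : M2Z} (h : IsPosSymmRoot G) {γ : PSL2Z} {s : ℝ}
    (hconj : IsConj γ (QuotientGroup.mk (sqSL G))) (hlen : TransLenLE γ s) :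
    (G.trace : ℝ) ≤ Real.exp (s / 4) := by
  obtain ⟨A, rfl, hA⟩ := hlen
  rw [abs_trace_eq_of_isConj_mk hconj, trace_sqSL h.det_eq, abs_of_nonneg (by positivity)] at hA
  push_cast at hA
  exact le_exp_of_two_mul_arcosh_le (by exact_mod_cast h.trace_pos) hA

theorem IsPosSymmRoot.transLenLE {G : M2Z} (h : IsPosSymmRoot G) {s : ℝ}
    (hs : G.trace + 1 ≤ Real.exp (s / 4)) : TransLenLE (QuotientGroup.mk (sqSL G)) s := by
  refine ⟨sqSL G, rfl, ?_⟩
  rw [trace_sqSL h.det_eq, abs_of_nonneg (by positivity)]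
  push_cast
  exact two_mul_arcosh_le_of_add_one_le_exp (by exact_mod_cast h.trace_pos) hs

theorem ambRecClasses_subset_image {s : ℝ} {K : ℕ} (hK : Real.exp (s / 4) < K + 1) :
    ambRecClasses s ⊆ (fun p => ConjClasses.mk (quadElt p)) '' reducedQuads K := by
  rintro _ ⟨γ, rfl, hprim, hhyp, hlen, hrec, δ, hδ, hamb⟩
  obtain ⟨G, hG, hγG⟩ := exists_isPosSymmRoot_isConj hprim hhyp hrec hδ hamb
  obtain ⟨a, b, c, d, hquad, htr, hGquad⟩ := hG.exists_isReducedQuad_isConj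
  have htr_le : G.trace ≤ K := by
    have : (G.trace : ℝ) < K + 1 := (hG.trace_le_exp hγG hlen).trans_lt hK
    exact Int.lt_add_one_iff.1 (by exact_mod_cast this)
  refine ⟨((a, b), c, d), Finset.mem_coe.2 (mem_reducedQuads.2 ⟨hquad, ?_⟩), ?_⟩
  · rwa [← trace_quadMatrix, htr]
  · exact (ConjClasses.mk_eq_mk_iff_isConj.2
      (hγG.trans (isConj_mk_iff.2 (.inl hGquad)))).symm

theorem mk_quadElt_mem_ambRecClasses {s : ℝ} {K : ℕ} (hK : K + 1 ≤ Real.exp (s / 4))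
    {p : (ℤ × ℤ) × ℤ × ℤ} (hp : p ∈ reducedQuads K) (hprim : IsPrim (quadElt p)) :
    ConjClasses.mk (quadElt p) ∈ ambRecClasses s := by
  obtain ⟨hquad, hle⟩ := mem_reducedQuads.1 hp
  have hroot := hquad.isPosSymmRoot
  rw [← trace_quadMatrix] at hle
  have hle' : ((quadMatrix p.1.1 p.1.2 p.2.1 p.2.2).trace : ℝ) ≤ K := by exact_mod_cast hle
  exact ⟨quadElt p, rfl, hprim, hroot.isHyp, hroot.transLenLE (by linarith), hroot.isConj_inv,
    hquad.exists_isConj_amb⟩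

theorem nAmbRec_le_card_reducedQuads {s : ℝ} {K : ℕ} (hK : Real.exp (s / 4) < K + 1) :
    NAmbRec s ≤ (reducedQuads K).card := calc
  NAmbRec s = (ambRecClasses s).ncard := nAmbRec_eq_ncard s
  _ ≤ ((fun p => ConjClasses.mk (quadElt p)) '' reducedQuads K).ncard :=
    Set.ncard_le_ncard (ambRecClasses_subset_image hK) ((Finset.finite_toSet _).image _)
  _ ≤ (reducedQuads K : Set ((ℤ × ℤ) × ℤ × ℤ)).ncard := Set.ncard_image_le (Finset.finite_toSet _)
  _ = (reducedQuads K).card := Set.ncard_coe_finset _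

theorem ambRecClasses_finite (s : ℝ) : (ambRecClasses s).Finite := by
  obtain ⟨K, hK⟩ := exists_nat_gt (Real.exp (s / 4))
  exact ((Finset.finite_toSet _).image _).subset
    (ambRecClasses_subset_image (hK.trans (lt_add_one _)))

theorem injOn_mk_quadElt (K : ℕ) :
    Set.InjOn (fun p => ConjClasses.mk (quadElt p))
      {p | p ∈ reducedQuads K ∧ IsPrim (quadElt p)} := by
  intro p hp q hq hpq
  obtain ⟨h₁, h₂, h₃, h₄⟩ := (mem_reducedQuads.1 hp.1).1.eq_of_isConj
    (mem_reducedQuads.1 hq.1).1 hp.2 (ConjClasses.mk_eq_mk_iff_isConj.1 hpq)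
  exact Prod.ext (Prod.ext h₁ h₂) (Prod.ext h₃ h₄)

theorem card_reducedQuads_le_nAmbRec_add {s : ℝ} {K : ℕ} (hK : 1 ≤ K)
    (hKs : K + 1 ≤ Real.exp (s / 4)) : (reducedQuads K).card ≤ NAmbRec s + 60 * K := by
  classical
  have hprim : Finset.card {p ∈ reducedQuads K | IsPrim (quadElt p)} ≤ NAmbRec s := by
    rw [nAmbRec_eq_ncard, ← Set.ncard_coe_finset, Finset.coe_filter,
      ← (injOn_mk_quadElt K).ncard_image]
    refine Set.ncard_le_ncard ?_ (ambRecClasses_finite s)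
    rintro _ ⟨p, ⟨hp, hp_prim⟩, rfl⟩
    exact mk_quadElt_mem_ambRecClasses hKs hp hp_prim
  have hsplit := Finset.card_filter_add_card_filter_not (s := reducedQuads K)
    (fun p => IsPrim (quadElt p))
  linarith [card_filter_not_isPrim_le hK]

theorem mul_log_sub_mul_log_le {x y : ℝ} (hx : 0 < x) (hy : 0 < y) :
    x * Real.log x - y * Real.log y ≤ (x - y) * (1 + Real.log x) := by
  have hlog : Real.log (x / y) ≤ x / y - 1 := Real.log_le_sub_one_of_pos (by positivity)
  rw [Real.log_div hx.ne' hy.ne', div_sub_one hy.ne', le_div_iff₀ hy] at hlog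
  linarith

theorem mul_log_sub_mul_log_le_two_mul {x y : ℝ} (hx : 1 ≤ x) (hy : 0 < y) (hxy : x - y ≤ 2) :
    x * Real.log x - y * Real.log y ≤ 2 * x := by
  have hlog : 0 ≤ Real.log x := Real.log_nonneg hx
  have hlog_le : Real.log x ≤ x - 1 := Real.log_le_sub_one_of_pos (by linarith)
  calc x * Real.log x - y * Real.log y
      ≤ (x - y) * (1 + Real.log x) := mul_log_sub_mul_log_le (by linarith) hy
    _ ≤ 2 * x := mul_le_mul hxy (by linarith) (by linarith) zero_le_two

theorem exists_abs_nAmbRec_sub_mul_log_le :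
    ∃ C : ℝ, ∀ x : ℝ, 2 ≤ x →
      |(NAmbRec (4 * Real.log x) : ℝ) - 3 / (2 * Real.pi) * x * Real.log x| ≤ C * x := by
  obtain ⟨C, hC₀, hC⟩ := exists_abs_card_reducedQuads_sub_mul_log_le
  refine ⟨C + 60 + 3 / (2 * Real.pi) * 2, fun x hx => ?_⟩
  have hexp : Real.exp (4 * Real.log x / 4) = x := by
    rw [mul_div_cancel_left₀ _ four_ne_zero, Real.exp_log (by linarith)]
  obtain ⟨L, hL⟩ : ∃ L, ⌊x⌋₊ = L + 1 :=
    Nat.exists_eq_add_one.2 (Nat.floor_pos.2 (by linarith))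
  have hL_one : 1 ≤ L := by
    have : 2 ≤ ⌊x⌋₊ := Nat.le_floor (by exact_mod_cast hx)
    omega
  have hL_le : ((L + 1 : ℕ) : ℝ) ≤ x := hL ▸ Nat.floor_le (by linarith)
  have hL_lt : x < (L + 1 : ℕ) + 1 := hL ▸ Nat.lt_floor_add_one x
  have hL_pos : (1 : ℝ) ≤ L := by exact_mod_cast hL_one
  have hupper : (NAmbRec (4 * Real.log x) : ℝ) ≤ (reducedQuads (L + 1)).card := by
    exact_mod_cast nAmbRec_le_card_reducedQuads (hexp.trans_lt hL_lt)
  have hlower : ((reducedQuads L).card : ℝ) ≤ NAmbRec (4 * Real.log x) + 60 * L := by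
    exact_mod_cast card_reducedQuads_le_nAmbRec_add hL_one (by rw [hexp]; exact_mod_cast hL_le)
  have hcard_upper := (abs_le.1 (hC (L + 1) (by omega))).2
  have hcard_lower := (abs_le.1 (hC L hL_one)).1
  have hlog_upper : ((L + 1 : ℕ) : ℝ) * Real.log (L + 1 : ℕ) ≤ x * Real.log x :=
    mul_le_mul hL_le (Real.log_le_log (by positivity) hL_le) (Real.log_natCast_nonneg _)
      (by linarith)
  push_cast at *
  have hlog_lower : x * Real.log x - L * Real.log L ≤ 2 * x :=
    mul_log_sub_mul_log_le_two_mul (by linarith) (by linarith) (by linarith)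
  have hc : 0 < 3 / (2 * Real.pi) := by positivity
  generalize 3 / (2 * Real.pi) = c at *
  rw [abs_le]
  constructor <;> nlinarith

end Counting

/-- Theorem 14, second claim: as `s → +∞`,
`𝒩_{AR}(s) = (3/(8π)) s e^{s/4} + O(e^{s/4})`. -/
theorem ambiguous_reciprocal_classes_asymptotic :
    (fun s : ℝ => (NAmbRec s : ℝ) - 3 / (8 * Real.pi) * s * Real.exp (s / 4))
      =O[Filter.atTop] fun s : ℝ => Real.exp (s / 4) := by
  obtain ⟨C, hC⟩ := exists_abs_nAmbRec_sub_mul_log_le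
  refine Asymptotics.IsBigO.of_bound C ?_
  filter_upwards [Filter.eventually_ge_atTop 4] with s hs
  have hbound := hC (Real.exp (s / 4)) (by linarith [Real.add_one_le_exp (s / 4)])
  rw [Real.log_exp, mul_div_cancel₀ s four_ne_zero] at hbound
  rw [Real.norm_eq_abs, Real.norm_eq_abs, Real.abs_exp]
  convert hbound using 3
  field_simp
  ring
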